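/- Let μ_α and μ_β satisfy Assumption 2, let ω_α, ω_β be subordination functions for the pair, let μ_α ⊞ μ_β be the associated free additive convolution with continuous density ρ_{α⊞β}, and let E₀ be an exterior point of 𝒱_{α⊞β}. Then there exist constants C₁ > 0, K > 0 and δ > 0 such that either: |ρ_{α⊞β}(E) − C₁·√(E − E₀)| ≤ K·(E − E₀) for all E ∈ (E₀, E₀ + δ) and ρ_{α⊞β}(E) = 0 for all E ∈ (E₀ − δ, E₀]; or the mirror statement holds: |ρ_{α⊞β}(E) − C₁·√(E₀ − E)| ≤ K·(E₀ − E) for all E ∈ (E₀ − δ, E₀) and ρ_{α⊞β}(E) = 0 for all E ∈ [E₀, E₀ + δ). -/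

import Mathlib

open MeasureTheory Complex Set Filter Topology

noncomputable section

/-- Cauchy–Stieltjes transform `m_μ(z) = ∫ (x − z)⁻¹ dμ(x)`. -/
def mTr (μ : Measure ℝ) (z : ℂ) : ℂ := ∫ x, ((x : ℂ) - z)⁻¹ ∂μ

/-- Negative reciprocal Cauchy–Stieltjes transform `F_μ(z) = −1/m_μ(z)`. -/
def FTr (μ : Measure ℝ) (z : ℂ) : ℂ := -(mTr μ z)⁻¹

/-- `I_ν(ω) = ∫ |x − ω|⁻² dν(x)`. -/
def Inu (ν : Measure ℝ) (ω : ℂ) : ℝ := ∫ x, (Complex.normSq ((x : ℂ) - ω))⁻¹ ∂ν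

/-- Topological support of a Borel measure on ℝ. -/
def msupport (μ : Measure ℝ) : Set ℝ := {x | ∀ U : Set ℝ, IsOpen U → x ∈ U → 0 < μ U}

/-- `μh` is a Nevanlinna measure for the (centered) measure `μ`:
a finite Borel measure with `F_μ(ω) − ω = ∫ (x − ω)⁻¹ dμh(x)` on ℂ⁺. -/
def IsNevanlinna (μ μh : Measure ℝ) : Prop :=
  IsFiniteMeasure μh ∧ ∀ ω : ℂ, 0 < ω.im → FTr μ ω - ω = ∫ x, ((x : ℂ) - ω)⁻¹ ∂μh

/-- Subordination function for `μ` at time `t`. -/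
structure IsSubordination (μ : Measure ℝ) (t : ℝ) (ω : ℂ → ℂ) : Prop where
  contOn : ContinuousOn ω {z : ℂ | 0 ≤ z.im}
  mapsTo : ∀ z : ℂ, 0 ≤ z.im → 0 ≤ (ω z).im
  diff : DifferentiableOn ℂ ω {z : ℂ | 0 < z.im}
  im_ge : ∀ z : ℂ, 0 < z.im → z.im ≤ (ω z).im
  subord : ∀ z : ℂ, 0 < z.im → (t : ℂ) * ω z - z = ((t - 1 : ℝ) : ℂ) * FTr μ (ω z)

/-- `ν = μ^{⊞t}`, the free convolution power associated with the subordination function `ω`. -/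
def IsFreePower (μ : Measure ℝ) (t : ℝ) (ω : ℂ → ℂ) (ν : Measure ℝ) : Prop :=
  IsProbabilityMeasure ν ∧ ∀ z : ℂ, 0 < z.im → mTr ν z = mTr μ (ω z)

/-- Subordination functions for the pair `(μa, μb)`. -/
structure IsPairSubordination (μa μb : Measure ℝ) (ωa ωb : ℂ → ℂ) : Prop where
  diff_a : DifferentiableOn ℂ ωa {z : ℂ | 0 < z.im}
  diff_b : DifferentiableOn ℂ ωb {z : ℂ | 0 < z.im}
  im_a : ∀ z : ℂ, 0 < z.im → z.im ≤ (ωa z).im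
  im_b : ∀ z : ℂ, 0 < z.im → z.im ≤ (ωb z).im
  lim_a : Tendsto (fun η : ℝ => ωa (η * Complex.I) / (η * Complex.I)) atTop (nhds 1)
  lim_b : Tendsto (fun η : ℝ => ωb (η * Complex.I) / (η * Complex.I)) atTop (nhds 1)
  eq_a : ∀ z : ℂ, 0 < z.im → ωa z + ωb z - z = FTr μa (ωb z)
  eq_b : ∀ z : ℂ, 0 < z.im → ωa z + ωb z - z = FTr μb (ωa z)

/-- `ν = μa ⊞ μb`, the free additive convolution. -/
def IsFreeConv (μa μb : Measure ℝ) (ωb : ℂ → ℂ) (ν : Measure ℝ) : Prop :=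
  IsProbabilityMeasure ν ∧ ∀ z : ℂ, 0 < z.im → mTr ν z = mTr μa (ωb z)

/-- Assumption 1 of the paper: `μ` is a centered, compactly supported probability
measure whose singular part consists of finitely many atoms and whose absolutely
continuous part has a density `ρ` of Jacobi type, supported on finitely many
disjoint compact intervals with power-law behavior (exponents in `(−1,1)`). -/
structure JacobiData (μ : Measure ℝ) where
  ρ : ℝ → ℝ
  n : ℕ
  npos : 0 < n
  Em : Fin n → ℝ
  Ep : Fin n → ℝ
  βm : Fin n → ℝ
  βp : Fin n → ℝ
  Cj : Fin n → ℝ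
  atoms : Finset ℝ
  w : ℝ → ℝ
  prob : IsProbabilityMeasure μ
  compactSupp : ∃ K : Set ℝ, IsCompact K ∧ μ Kᶜ = 0
  centered : ∫ x, x ∂μ = 0
  lt : ∀ j, Em j < Ep j
  disj : ∀ i j, i ≠ j → Disjoint (Set.Icc (Em i) (Ep i)) (Set.Icc (Em j) (Ep j))
  βm_mem : ∀ j, βm j ∈ Set.Ioo (-1 : ℝ) 1
  βp_mem : ∀ j, βp j ∈ Set.Ioo (-1 : ℝ) 1
  Cj_ge : ∀ j, 1 ≤ Cj j
  ρ_nonneg : ∀ x, 0 ≤ ρ x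
  ρ_supp : ∀ x, x ∉ ⋃ j, Set.Icc (Em j) (Ep j) → ρ x = 0
  powerLaw : ∀ j, ∀ᵐ E ∂(volume.restrict (Set.Icc (Em j) (Ep j))),
      (Cj j)⁻¹ * ((E - Em j) ^ (βm j) * (Ep j - E) ^ (βp j)) ≤ ρ E ∧
      ρ E ≤ Cj j * ((E - Em j) ^ (βm j) * (Ep j - E) ^ (βp j))
  w_nonneg : ∀ a, 0 ≤ w a
  decomp : μ = volume.withDensity (fun x => ENNReal.ofReal (ρ x))
      + ∑ a ∈ atoms, ENNReal.ofReal (w a) • Measure.dirac a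

/-- The support of the absolutely continuous part of `μ`. -/
def JacobiData.acSupport {μ : Measure ℝ} (d : JacobiData μ) : Set ℝ :=
  ⋃ j, Set.Icc (d.Em j) (d.Ep j)

/-- The Hölder condition (5.1)/(2.8) of the paper on the density of `μ_ac`. -/
def JacobiData.HolderCond {μ : Measure ℝ} (d : JacobiData μ) : Prop :=
  ∀ j, ∃ L γ : NNReal, 0 < γ ∧
    HolderOnWith L γ
      (fun E => d.ρ E / ((E - d.Em j) ^ (d.βm j) * (d.Ep j - E) ^ (d.βp j)))
      (Set.Icc (d.Em j) (d.Ep j))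

/-- Assumption 2 of the paper: a centered, absolutely continuous probability measure
supported on finitely many disjoint compact intervals, with density of Jacobi type. -/
structure AbsJacobiData (μ : Measure ℝ) where
  ρ : ℝ → ℝ
  n : ℕ
  npos : 0 < n
  Am : Fin n → ℝ
  Ap : Fin n → ℝ
  sm : Fin n → ℝ
  sp : Fin n → ℝ
  Cj : Fin n → ℝ
  prob : IsProbabilityMeasure μ
  centered : ∫ x, x ∂μ = 0
  lt : ∀ j, Am j < Ap j
  disj : ∀ i j, i ≠ j → Disjoint (Set.Icc (Am i) (Ap i)) (Set.Icc (Am j) (Ap j))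
  sm_mem : ∀ j, sm j ∈ Set.Ioo (-1 : ℝ) 1
  sp_mem : ∀ j, sp j ∈ Set.Ioo (-1 : ℝ) 1
  Cj_ge : ∀ j, 1 ≤ Cj j
  ρ_nonneg : ∀ x, 0 ≤ ρ x
  ρ_supp : ∀ x, x ∉ ⋃ j, Set.Icc (Am j) (Ap j) → ρ x = 0
  powerLaw : ∀ j, ∀ᵐ E ∂(volume.restrict (Set.Icc (Am j) (Ap j))),
      (Cj j)⁻¹ * ((E - Am j) ^ (sm j) * (Ap j - E) ^ (sp j)) ≤ ρ E ∧
      ρ E ≤ Cj j * ((E - Am j) ^ (sm j) * (Ap j - E) ^ (sp j))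
  decomp : μ = volume.withDensity (fun x => ENNReal.ofReal (ρ x))

/-!
The variances `Î` of the normalized resolvents of the two measures obey `Î_α(ω_β) Î_β(ω_α) < 1` in
the upper half-plane. Through Cauchy–Schwarz this makes the solution of the subordination equations
unique, and, since `Î` blows up at the support of a measure whose mass near each point of the
support exceeds the square of the radius, it keeps the boundary values of `ω_α` and `ω_β` away from
the supports wherever the density vanishes.

Hence at an edge `E₀` one of the two functions, say `ω_β`, tends to a finite real point `b` off the
support of `μ_α`, where the transform `m_α` has a local inverse. Writing the equation of `ω_α` in
terms of `m = m_α(ω_β) = m_β(ω_α)` expresses the spectral parameter as an analytic function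
`Z(m) = m_α⁻¹(m) - K(m)`, real on the real line, where `K(m) = -1/m - m_β⁻¹(m)` stays analytic even
if `ω_α` escapes to infinity. By uniqueness, `Z` inverts the transform of `μ_α ⊞ μ_β` near `E₀`.

In a local coordinate `Z` is `u ↦ E₀ + κ u ^ k`. If `k = 1` the density vanishes near `E₀`; if
`k ≥ 3` some rays in the upper half-plane are mapped to the left of `E₀` and others to the right, so
that the density is positive on both sides. At an exterior point therefore `k = 2`.
-/

section CauchySchwarz

theorem sq_norm_integral_mul_le {α : Type*} {mα : MeasurableSpace α} {μ : Measure α}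
    {f g : α → ℂ} (hf : MemLp f 2 μ) (hg : MemLp g 2 μ) :
    ‖∫ x, f x * g x ∂μ‖ ^ 2 ≤ (∫ x, ‖f x‖ ^ 2 ∂μ) * ∫ x, ‖g x‖ ^ 2 ∂μ := by
  have key := integral_mul_norm_le_Lp_mul_Lq (p := 2) (q := 2) (f := f) (g := g)
    Real.HolderConjugate.two_two (by simpa using hf) (by simpa using hg)
  simp only [Real.rpow_two, ← Real.sqrt_eq_rpow] at key
  have hle : ‖∫ x, f x * g x ∂μ‖ ≤ √(∫ x, ‖f x‖ ^ 2 ∂μ) * √(∫ x, ‖g x‖ ^ 2 ∂μ) :=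
    (norm_integral_le_integral_norm _).trans (by simpa only [norm_mul] using key)
  calc ‖∫ x, f x * g x ∂μ‖ ^ 2
      ≤ (√(∫ x, ‖f x‖ ^ 2 ∂μ) * √(∫ x, ‖g x‖ ^ 2 ∂μ)) ^ 2 := by gcongr
    _ = (∫ x, ‖f x‖ ^ 2 ∂μ) * ∫ x, ‖g x‖ ^ 2 ∂μ := by
      rw [mul_pow, Real.sq_sqrt (by positivity), Real.sq_sqrt (by positivity)]

end CauchySchwarz

section Transforms

variable {μ : Measure ℝ} {ω : ℂ}

theorem abs_im_le_norm_ofReal_sub (ω : ℂ) (x : ℝ) : |ω.im| ≤ ‖(x : ℂ) - ω‖ := by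
  simpa using Complex.abs_im_le_norm ((x : ℂ) - ω)

theorem ofReal_sub_ne_zero (hω : ω.im ≠ 0) (x : ℝ) : (x : ℂ) - ω ≠ 0 :=
  norm_pos_iff.1 ((abs_pos.2 hω).trans_le (abs_im_le_norm_ofReal_sub ω x))

theorem norm_inv_ofReal_sub_le (hω : ω.im ≠ 0) (x : ℝ) : ‖((x : ℂ) - ω)⁻¹‖ ≤ |ω.im|⁻¹ := by
  rw [norm_inv]
  exact inv_anti₀ (abs_pos.2 hω) (abs_im_le_norm_ofReal_sub ω x)

theorem Inu_eq_integral_sq_norm (μ : Measure ℝ) (ω : ℂ) :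
    Inu μ ω = ∫ x : ℝ, ‖((x : ℂ) - ω)⁻¹‖ ^ 2 ∂μ := by
  simp only [Inu, normSq_eq_norm_sq, norm_inv, inv_pow]

theorem mTr_im_of_im_eq_zero (hω : ω.im = 0) : (mTr μ ω).im = 0 := by
  obtain ⟨a, rfl⟩ : ∃ a : ℝ, ω = a := ⟨ω.re, Complex.ext rfl (by simp [hω])⟩
  have hreal : mTr μ a = ((∫ x, (x - a)⁻¹ ∂μ : ℝ) : ℂ) := by
    rw [mTr, ← integral_complex_ofReal]
    push_cast
    rfl
  rw [hreal, ofReal_im]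

variable [IsFiniteMeasure μ]

theorem memLp_inv_ofReal_sub (hω : ω.im ≠ 0) (p : ENNReal) :
    MemLp (fun x : ℝ => ((x : ℂ) - ω)⁻¹) p μ :=
  MemLp.of_bound (Measurable.aestronglyMeasurable (by fun_prop)) _
    (ae_of_all _ (norm_inv_ofReal_sub_le hω))

theorem integrable_inv_ofReal_sub (hω : ω.im ≠ 0) : Integrable (fun x : ℝ => ((x : ℂ) - ω)⁻¹) μ :=
  memLp_one_iff_integrable.1 (memLp_inv_ofReal_sub hω 1)

theorem integrable_sq_norm_inv_ofReal_sub (hω : ω.im ≠ 0) :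
    Integrable (fun x : ℝ => ‖((x : ℂ) - ω)⁻¹‖ ^ 2) μ :=
  (memLp_inv_ofReal_sub hω 2).integrable_norm_pow (by norm_num)

theorem mTr_im (μ : Measure ℝ) [IsFiniteMeasure μ] (ω : ℂ) :
    (mTr μ ω).im = ω.im * Inu μ ω := by
  rcases eq_or_ne ω.im 0 with hω | hω
  · rw [mTr_im_of_im_eq_zero hω, hω, zero_mul]
  · have him : (mTr μ ω).im = ∫ x : ℝ, (((x : ℂ) - ω)⁻¹).im ∂μ :=
      (integral_im (integrable_inv_ofReal_sub hω)).symm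
    rw [him, Inu, ← integral_const_mul]
    refine integral_congr_ae (ae_of_all _ fun x => ?_)
    simp [Complex.inv_im, div_eq_mul_inv]

theorem Inu_pos [NeZero μ] (hω : ω.im ≠ 0) : 0 < Inu μ ω := by
  rw [Inu_eq_integral_sq_norm, integral_pos_iff_support_of_nonneg (fun _ => by positivity)
    (integrable_sq_norm_inv_ofReal_sub hω)]
  have hsupp : Function.support (fun x : ℝ => ‖((x : ℂ) - ω)⁻¹‖ ^ 2) = univ :=
    eq_univ_of_forall fun x => by simpa using ofReal_sub_ne_zero hω x
  rw [hsupp]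
  exact NeZero.pos _

theorem mTr_im_pos_iff [NeZero μ] : 0 < (mTr μ ω).im ↔ 0 < ω.im := by
  rcases eq_or_ne ω.im 0 with hω | hω
  · simp [mTr_im_of_im_eq_zero hω, hω]
  · rw [mTr_im, mul_pos_iff_of_pos_right (Inu_pos hω)]

theorem mTr_im_eq_zero_iff [NeZero μ] : (mTr μ ω).im = 0 ↔ ω.im = 0 := by
  refine ⟨fun h => ?_, mTr_im_of_im_eq_zero⟩
  by_contra hω
  rw [mTr_im] at h
  exact mul_ne_zero hω (Inu_pos hω).ne' h

theorem mTr_ne_zero [NeZero μ] (hω : ω.im ≠ 0) : mTr μ ω ≠ 0 := fun h =>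
  hω (mTr_im_eq_zero_iff.1 (by rw [h, zero_im]))

end Transforms

section Nevanlinna

/-- The integral `Î_μ(ω) = I_μ(ω) / |m_μ(ω)|² - 1`. When `F_μ(ω) - ω` is the transform of a
Nevanlinna measure `μ̂`, this is `I_μ̂(ω)`; defining it through `μ` itself makes it the variance of
the normalized resolvent `(x - ω)⁻¹ / m_μ(ω)` and avoids the existence of `μ̂`. -/
def InuHat (μ : Measure ℝ) (ω : ℂ) : ℝ := Inu μ ω / ‖mTr μ ω‖ ^ 2 - 1

/-- The normalized resolvent `(x - ω)⁻¹ / m_μ(ω)`, centered under `μ`. -/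
def centeredResolvent (μ : Measure ℝ) (ω : ℂ) (x : ℝ) : ℂ := ((x : ℂ) - ω)⁻¹ / mTr μ ω - 1

variable {μ : Measure ℝ} {ω ω' : ℂ}

theorem FTr_im [IsFiniteMeasure μ] (ω : ℂ) : (FTr μ ω).im = ω.im * (1 + InuHat μ ω) := by
  rw [FTr, neg_im, inv_im, mTr_im, InuHat, normSq_eq_norm_sq]
  ring

variable [IsProbabilityMeasure μ]

theorem memLp_centeredResolvent (hω : ω.im ≠ 0) (p : ENNReal) :
    MemLp (centeredResolvent μ ω) p μ := by
  have h := ((memLp_inv_ofReal_sub (μ := μ) hω p).const_mul (mTr μ ω)⁻¹).sub (memLp_const (1 : ℂ))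
  simp only [← div_eq_inv_mul] at h
  exact h

theorem integrable_centeredResolvent (hω : ω.im ≠ 0) : Integrable (centeredResolvent μ ω) μ :=
  memLp_one_iff_integrable.1 (memLp_centeredResolvent hω 1)

theorem integral_centeredResolvent (hω : ω.im ≠ 0) : ∫ x, centeredResolvent μ ω x ∂μ = 0 := by
  simp only [centeredResolvent]
  rw [integral_sub ((integrable_inv_ofReal_sub hω).div_const _) (integrable_const _),
    integral_div, ← mTr, div_self (mTr_ne_zero hω)]
  simp

theorem integral_sq_norm_centeredResolvent (hω : ω.im ≠ 0) :
    ∫ x, ‖centeredResolvent μ ω x‖ ^ 2 ∂μ = InuHat μ ω := by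
  have hre : ∫ x, (centeredResolvent μ ω x).re ∂μ = 0 := by
    simpa [integral_centeredResolvent hω] using
      integral_re (integrable_centeredResolvent (μ := μ) hω)
  have hexpand (x : ℝ) : ‖centeredResolvent μ ω x‖ ^ 2 =
      ‖((x : ℂ) - ω)⁻¹‖ ^ 2 / ‖mTr μ ω‖ ^ 2 - 1 - 2 * (centeredResolvent μ ω x).re := by
    rw [centeredResolvent, ← normSq_eq_norm_sq, normSq_sub, normSq_eq_norm_sq, norm_div, div_pow]
    simp
    ring
  have hsq : Integrable (fun x : ℝ => ‖((x : ℂ) - ω)⁻¹‖ ^ 2 / ‖mTr μ ω‖ ^ 2) μ :=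
    (integrable_sq_norm_inv_ofReal_sub hω).div_const _
  have hsq' : Integrable (fun x : ℝ => ‖((x : ℂ) - ω)⁻¹‖ ^ 2 / ‖mTr μ ω‖ ^ 2 - 1) μ :=
    hsq.sub (integrable_const _)
  have hint : Integrable (fun x => (centeredResolvent μ ω x).re) μ :=
    (integrable_centeredResolvent hω).re
  simp only [hexpand]
  rw [integral_sub hsq' (hint.const_mul 2), integral_sub hsq (integrable_const _),
    integral_const_mul, hre, integral_div, ← Inu_eq_integral_sq_norm, InuHat]
  simp

theorem InuHat_nonneg (hω : ω.im ≠ 0) : 0 ≤ InuHat μ ω := by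
  rw [← integral_sq_norm_centeredResolvent hω]
  positivity

theorem sub_mul_integral_inv_mul_inv (hω : ω.im ≠ 0) (hω' : ω'.im ≠ 0) :
    (ω - ω') * ∫ x : ℝ, ((x : ℂ) - ω)⁻¹ * ((x : ℂ) - ω')⁻¹ ∂μ = mTr μ ω - mTr μ ω' := by
  rw [mTr, mTr, ← integral_sub (integrable_inv_ofReal_sub hω) (integrable_inv_ofReal_sub hω'),
    ← integral_const_mul]
  refine integral_congr_ae (ae_of_all _ fun x => ?_)
  have := ofReal_sub_ne_zero hω x
  have := ofReal_sub_ne_zero hω' x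
  field

theorem sub_mul_integral_centeredResolvent_mul (hω : ω.im ≠ 0) (hω' : ω'.im ≠ 0) :
    (ω - ω') * ∫ x, centeredResolvent μ ω x * centeredResolvent μ ω' x ∂μ =
      (FTr μ ω - ω) - (FTr μ ω' - ω') := by
  have hm := mTr_ne_zero (μ := μ) hω
  have hm' := mTr_ne_zero (μ := μ) hω'
  have hc := integrable_centeredResolvent (μ := μ) hω
  have hc' := integrable_centeredResolvent (μ := μ) hω'
  set f : ℝ → ℂ := fun x => ((x : ℂ) - ω)⁻¹ * ((x : ℂ) - ω')⁻¹ / (mTr μ ω * mTr μ ω') with hf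
  have hfi : Integrable f μ :=
    ((memLp_inv_ofReal_sub hω 2).integrable_mul (memLp_inv_ofReal_sub hω' 2)).div_const _
  have h₁ : Integrable (1 : ℝ → ℂ) μ := integrable_const 1
  have hf₁ : Integrable (f - 1) μ := hfi.sub h₁
  have hexpand : (fun x => centeredResolvent μ ω x * centeredResolvent μ ω' x) =
      f - 1 - centeredResolvent μ ω - centeredResolvent μ ω' := by
    ext x
    simp only [centeredResolvent, hf, Pi.sub_apply, Pi.one_apply]
    ring
  have hcov : ∫ x, centeredResolvent μ ω x * centeredResolvent μ ω' x ∂μ =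
      (∫ x : ℝ, ((x : ℂ) - ω)⁻¹ * ((x : ℂ) - ω')⁻¹ ∂μ) / (mTr μ ω * mTr μ ω') - 1 := by
    rw [hexpand, integral_sub' (hf₁.sub hc) hc', integral_sub' hf₁ hc,
      integral_sub' hfi h₁, integral_centeredResolvent hω,
      integral_centeredResolvent hω', integral_div]
    simp
  rw [hcov, mul_sub, ← mul_div_assoc, sub_mul_integral_inv_mul_inv hω hω', FTr, FTr]
  field

theorem sq_norm_FTr_sub_le (hω : ω.im ≠ 0) (hω' : ω'.im ≠ 0) :
    ‖(FTr μ ω - ω) - (FTr μ ω' - ω')‖ ^ 2 ≤ ‖ω - ω'‖ ^ 2 * (InuHat μ ω * InuHat μ ω') := by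
  rw [← sub_mul_integral_centeredResolvent_mul hω hω', norm_mul, mul_pow,
    ← integral_sq_norm_centeredResolvent hω, ← integral_sq_norm_centeredResolvent hω']
  gcongr
  exact sq_norm_integral_mul_le (memLp_centeredResolvent hω 2) (memLp_centeredResolvent hω' 2)

end Nevanlinna

section SubordinationPoints

/-- The pair `(w, a)` solves the subordination system of `(μ, ν)` at `z` in the upper half-plane,
so that for subordination functions `w = ω_ν(z)` and `a = ω_μ(z)`. -/
structure IsSubordinationPoint (μ ν : Measure ℝ) (w a z : ℂ) : Prop where
  im_pos : 0 < z.im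
  im_left_pos : 0 < w.im
  im_right_pos : 0 < a.im
  mTr_eq : mTr μ w = mTr ν a
  add_sub_eq : w + a - z = FTr μ w

namespace IsSubordinationPoint

variable {μ ν : Measure ℝ} {w a w' a' z : ℂ}

theorem symm (h : IsSubordinationPoint μ ν w a z) : IsSubordinationPoint ν μ a w z :=
  ⟨h.im_pos, h.im_right_pos, h.im_left_pos, h.mTr_eq.symm, by
    rw [FTr, ← h.mTr_eq, ← FTr, ← h.add_sub_eq]; ring⟩

theorem FTr_sub (h : IsSubordinationPoint μ ν w a z) : FTr μ w - w = a - z := by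
  rw [← h.add_sub_eq]
  ring

theorem add_sub_mul_mTr [IsFiniteMeasure μ] [NeZero μ] (h : IsSubordinationPoint μ ν w a z) :
    (w + a - z) * mTr μ w = -1 := by
  rw [h.add_sub_eq, FTr, neg_mul, inv_mul_cancel₀ (mTr_ne_zero h.im_left_pos.ne')]

theorem im_mul_InuHat [IsFiniteMeasure μ] (h : IsSubordinationPoint μ ν w a z) :
    w.im * InuHat μ w = a.im - z.im := by
  have him := congrArg Complex.im h.FTr_sub
  rw [sub_im, sub_im, FTr_im] at him
  linarith

theorem InuHat_mul_InuHat_lt_one [IsProbabilityMeasure μ] [IsProbabilityMeasure ν]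
    (h : IsSubordinationPoint μ ν w a z) : InuHat μ w * InuHat ν a < 1 := by
  have hz := h.im_pos
  have hw := h.im_left_pos
  have ha := h.im_right_pos
  have hμ := h.im_mul_InuHat
  have hν := h.symm.im_mul_InuHat
  have hμ₀ : 0 ≤ a.im - z.im := hμ ▸ mul_nonneg hw.le (InuHat_nonneg hw.ne')
  have hlt : (w.im * a.im) * (InuHat μ w * InuHat ν a) < (w.im * a.im) * 1 := by
    calc (w.im * a.im) * (InuHat μ w * InuHat ν a)
        = (w.im * InuHat μ w) * (a.im * InuHat ν a) := by ring
      _ = (a.im - z.im) * (w.im - z.im) := by rw [hμ, hν]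
      _ < (w.im * a.im) * 1 := by nlinarith
  exact lt_of_mul_lt_mul_left hlt (by positivity)

theorem sq_norm_sub_le [IsProbabilityMeasure μ] (h : IsSubordinationPoint μ ν w a z)
    (h' : IsSubordinationPoint μ ν w' a' z) :
    ‖a - a'‖ ^ 2 ≤ ‖w - w'‖ ^ 2 * (InuHat μ w * InuHat μ w') := by
  have hle := sq_norm_FTr_sub_le (μ := μ) h.im_left_pos.ne' h'.im_left_pos.ne'
  rwa [h.FTr_sub, h'.FTr_sub, sub_sub_sub_cancel_right] at hle

theorem left_unique [IsProbabilityMeasure μ] [IsProbabilityMeasure ν]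
    (h : IsSubordinationPoint μ ν w a z)
    (h' : IsSubordinationPoint μ ν w' a' z) : w = w' := by
  by_contra hne
  have hpos : 0 < ‖w - w'‖ ^ 2 := by
    have := norm_pos_iff.2 (sub_ne_zero.2 hne)
    positivity
  have hμν := mul_lt_mul'' h.InuHat_mul_InuHat_lt_one h'.InuHat_mul_InuHat_lt_one
    (mul_nonneg (InuHat_nonneg h.im_left_pos.ne') (InuHat_nonneg h.im_right_pos.ne'))
    (mul_nonneg (InuHat_nonneg h'.im_left_pos.ne') (InuHat_nonneg h'.im_right_pos.ne'))
  have hν := mul_nonneg (InuHat_nonneg (μ := ν) h.im_right_pos.ne')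
    (InuHat_nonneg (μ := ν) h'.im_right_pos.ne')
  have hlt : ‖w - w'‖ ^ 2 < ‖w - w'‖ ^ 2 := by
    calc ‖w - w'‖ ^ 2
        ≤ ‖a - a'‖ ^ 2 * (InuHat ν a * InuHat ν a') := h.symm.sq_norm_sub_le h'.symm
      _ ≤ ‖w - w'‖ ^ 2 * (InuHat μ w * InuHat μ w') * (InuHat ν a * InuHat ν a') := by
        gcongr
        exact h.sq_norm_sub_le h'
      _ = ‖w - w'‖ ^ 2 * (InuHat μ w * InuHat ν a * (InuHat μ w' * InuHat ν a')) := by ring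
      _ < ‖w - w'‖ ^ 2 * (1 * 1) := by gcongr
      _ = ‖w - w'‖ ^ 2 := by ring
  exact lt_irrefl _ hlt

end IsSubordinationPoint

namespace IsPairSubordination

variable {μa μb ν : Measure ℝ} {ωa ωb : ℂ → ℂ}

theorem symm (h : IsPairSubordination μa μb ωa ωb) : IsPairSubordination μb μa ωb ωa where
  diff_a := h.diff_b
  diff_b := h.diff_a
  im_a := h.im_b
  im_b := h.im_a
  lim_a := h.lim_b
  lim_b := h.lim_a
  eq_a z hz := by rw [add_comm, h.eq_b z hz]
  eq_b z hz := by rw [add_comm, h.eq_a z hz]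

theorem isSubordinationPoint (h : IsPairSubordination μa μb ωa ωb) {z : ℂ} (hz : 0 < z.im) :
    IsSubordinationPoint μa μb (ωb z) (ωa z) z where
  im_pos := hz
  im_left_pos := hz.trans_le (h.im_b z hz)
  im_right_pos := hz.trans_le (h.im_a z hz)
  mTr_eq := inv_injective (neg_injective ((h.eq_a z hz).symm.trans (h.eq_b z hz)))
  add_sub_eq := by rw [add_comm (ωb z), h.eq_a z hz]

theorem isFreeConv_symm (h : IsPairSubordination μa μb ωa ωb) (hν : IsFreeConv μa μb ωb ν) :
    IsFreeConv μb μa ωa ν :=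
  ⟨hν.1, fun z hz => by rw [hν.2 z hz, (h.isSubordinationPoint hz).mTr_eq]⟩

end IsPairSubordination

end SubordinationPoints

section CompactSupport

variable {μ : Measure ℝ} {ω : ℂ} {R : ℝ}

theorem exists_ae_abs_le_of_isCompact_support (h : IsCompact μ.support) :
    ∃ R : ℝ, ∀ᵐ x ∂μ, |x| ≤ R := by
  obtain ⟨R, hR⟩ := h.isBounded.subset_closedBall 0
  refine ⟨R, mem_of_superset Measure.support_mem_ae fun x hx => ?_⟩
  simpa using hR hx

theorem sub_le_norm_ofReal_sub {x : ℝ} (hx : |x| ≤ R) (ω : ℂ) : ‖ω‖ - R ≤ ‖(x : ℂ) - ω‖ := by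
  have h := norm_sub_norm_le ω x
  rw [norm_sub_rev, norm_real, Real.norm_eq_abs] at h
  linarith

theorem norm_ofReal_sub_le_add {x : ℝ} (hx : |x| ≤ R) (ω : ℂ) : ‖(x : ℂ) - ω‖ ≤ R + ‖ω‖ := by
  have h := norm_sub_le (x : ℂ) ω
  rw [norm_real, Real.norm_eq_abs] at h
  linarith

theorem variance_id_pos [IsProbabilityMeasure μ] [NullSingletonClass μ]
    (hR : ∀ᵐ x ∂μ, |x| ≤ R) : 0 < ProbabilityTheory.variance id μ := by
  have hfin : ProbabilityTheory.evariance id μ < ⊤ :=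
    ProbabilityTheory.evariance_lt_top (MemLp.of_bound aestronglyMeasurable_id R hR)
  refine ENNReal.toReal_pos (fun h => ?_) hfin.ne
  rw [ProbabilityTheory.evariance_eq_zero_iff aemeasurable_id] at h
  have hone : μ {∫ x, id x ∂μ} = 1 := (mem_ae_iff_prob_eq_one (measurableSet_singleton _)).1 h
  rw [measure_singleton] at hone
  exact zero_ne_one hone

theorem variance_le_InuHat_mul [IsProbabilityMeasure μ] (hR : ∀ᵐ x ∂μ, |x| ≤ R)
    (hω : ω.im ≠ 0) :
    ProbabilityTheory.variance id μ ≤ InuHat μ ω * (R + ‖ω‖) ^ 2 := by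
  have hm := mTr_ne_zero (μ := μ) hω
  set c : ℂ := ω + (mTr μ ω)⁻¹ with hc
  have hfactor (x : ℝ) : centeredResolvent μ ω x * ((x : ℂ) - ω) = c - x := by
    have := ofReal_sub_ne_zero hω x
    rw [centeredResolvent, hc]
    field
  have hle : ∀ᵐ x ∂μ, (x - c.re) ^ 2 ≤ ‖centeredResolvent μ ω x‖ ^ 2 * (R + ‖ω‖) ^ 2 := by
    filter_upwards [hR] with x hx
    calc (x - c.re) ^ 2 = |(c - x).re| ^ 2 := by rw [sq_abs, sub_re, ofReal_re]; ring
      _ ≤ ‖centeredResolvent μ ω x * ((x : ℂ) - ω)‖ ^ 2 := by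
        rw [hfactor]
        gcongr
        exact abs_re_le_norm _
      _ ≤ ‖centeredResolvent μ ω x‖ ^ 2 * (R + ‖ω‖) ^ 2 := by
        rw [norm_mul, mul_pow]
        gcongr
        exact norm_ofReal_sub_le_add hx ω
  calc ProbabilityTheory.variance id μ = ProbabilityTheory.variance (fun x => id x - c.re) μ :=
      (ProbabilityTheory.variance_sub_const aestronglyMeasurable_id _).symm
    _ ≤ ∫ x, (x - c.re) ^ 2 ∂μ := ProbabilityTheory.variance_le_expectation_sq (by fun_prop)
    _ ≤ ∫ x, ‖centeredResolvent μ ω x‖ ^ 2 * (R + ‖ω‖) ^ 2 ∂μ :=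
      integral_mono_of_nonneg (ae_of_all _ fun x => sq_nonneg _)
        (((memLp_centeredResolvent hω 2).integrable_norm_pow (by norm_num)).mul_const _) hle
    _ = InuHat μ ω * (R + ‖ω‖) ^ 2 := by
      rw [integral_mul_const, integral_sq_norm_centeredResolvent hω]

theorem integrable_inv_ofReal_sub_of_le_norm {δ : ℝ} [IsFiniteMeasure μ] (hδ : 0 < δ)
    (h : ∀ᵐ x : ℝ ∂μ, δ ≤ ‖(x : ℂ) - ω‖) : Integrable (fun x : ℝ => ((x : ℂ) - ω)⁻¹) μ := by
  refine Integrable.of_bound (Measurable.aestronglyMeasurable (by fun_prop)) δ⁻¹ ?_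
  filter_upwards [h] with x hx
  rw [norm_inv]
  exact inv_anti₀ hδ hx

theorem norm_mul_mTr_add_one_le [IsProbabilityMeasure μ] (hR : ∀ᵐ x ∂μ, |x| ≤ R)
    (hω : R < ‖ω‖) : ‖ω * mTr μ ω + 1‖ ≤ R * (‖ω‖ - R)⁻¹ := by
  have hδ : 0 < ‖ω‖ - R := sub_pos.2 hω
  have hgap : ∀ᵐ x : ℝ ∂μ, ‖ω‖ - R ≤ ‖(x : ℂ) - ω‖ :=
    hR.mono fun x hx => sub_le_norm_ofReal_sub hx ω
  have hint := integrable_inv_ofReal_sub_of_le_norm hδ hgap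
  have hone : ω * mTr μ ω + 1 = ∫ x : ℝ, (ω * ((x : ℂ) - ω)⁻¹ + 1) ∂μ := by
    rw [integral_add (hint.const_mul _) (integrable_const _), integral_const_mul, mTr]
    simp
  rw [hone]
  refine (norm_integral_le_of_norm_le_const ?_).trans_eq (by rw [probReal_univ, mul_one])
  filter_upwards [hR, hgap] with x hx hxω
  have hne : (x : ℂ) - ω ≠ 0 := norm_pos_iff.1 (hδ.trans_le hxω)
  have hsum : ω * ((x : ℂ) - ω)⁻¹ + 1 = x * ((x : ℂ) - ω)⁻¹ := by field
  rw [hsum, norm_mul, norm_inv, norm_real, Real.norm_eq_abs]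
  have := (abs_nonneg x).trans hx
  gcongr

theorem tendsto_mul_mTr_cobounded [IsProbabilityMeasure μ] (hR : ∀ᵐ x ∂μ, |x| ≤ R) :
    Tendsto (fun ω => ω * mTr μ ω) (Bornology.cobounded ℂ) (𝓝 (-1)) := by
  have hnorm := tendsto_norm_cobounded_atTop (E := ℂ)
  have hbound : Tendsto (fun ω : ℂ => R * (‖ω‖ - R)⁻¹) (Bornology.cobounded ℂ) (𝓝 0) := by
    simpa [sub_eq_add_neg] using (tendsto_inv_atTop_zero.comp
      (tendsto_atTop_add_const_right _ (-R) hnorm)).const_mul R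
  rw [tendsto_iff_norm_sub_tendsto_zero]
  refine squeeze_zero' (Eventually.of_forall fun _ => norm_nonneg _) ?_ hbound
  filter_upwards [hnorm.eventually_gt_atTop R] with ω hω
  simpa using norm_mul_mTr_add_one_le hR hω

theorem tendsto_mTr_cobounded [IsProbabilityMeasure μ] (hR : ∀ᵐ x ∂μ, |x| ≤ R) :
    Tendsto (mTr μ) (Bornology.cobounded ℂ) (𝓝 0) := by
  have h := (tendsto_inv₀_cobounded (α := ℂ)).mul (tendsto_mul_mTr_cobounded hR)
  rw [zero_mul] at h
  refine h.congr' ?_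
  filter_upwards [Bornology.eventually_ne_cobounded (0 : ℂ)] with ω hω
  rw [inv_mul_cancel_left₀ hω]

end CompactSupport

section SupportPoints

variable {μ : Measure ℝ} {ω : ℂ} {b : ℝ}

theorem tendsto_norm_sub_ofReal_nhdsWithin_upperHalfPlane (b : ℝ) :
    Tendsto (fun ω : ℂ => ‖ω - b‖) (𝓝[{z | 0 < z.im}] (b : ℂ)) (𝓝[>] 0) :=
  (tendsto_norm_sub_self_nhdsNE (b : ℂ)).mono_left <| nhdsWithin_mono _ fun z hz h => by
    simp only [mem_singleton_iff.1 h, mem_ofPred_eq, ofReal_im, lt_irrefl] at hz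

theorem measureReal_ball_le_mul_Inu [IsFiniteMeasure μ] (hω : ω.im ≠ 0) (b : ℝ) :
    μ.real (Metric.ball b ‖ω - b‖) / ‖ω - b‖ ^ 2 ≤ 4 * Inu μ ω := by
  have hr : 0 < ‖ω - b‖ := norm_sub_rev (b : ℂ) ω ▸ norm_pos_iff.2 (ofReal_sub_ne_zero hω b)
  have hsub : Metric.ball b ‖ω - b‖ ⊆
      {x : ℝ | ((2 * ‖ω - b‖) ^ 2)⁻¹ ≤ ‖((x : ℂ) - ω)⁻¹‖ ^ 2} := by
    intro x hx
    have hxω : ‖(x : ℂ) - ω‖ ≤ 2 * ‖ω - b‖ := by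
      have hxb : ‖(x : ℂ) - b‖ < ‖ω - b‖ := by
        rwa [← ofReal_sub, norm_real, ← dist_eq_norm]
      have := norm_sub_le_norm_sub_add_norm_sub (x : ℂ) b ω
      rw [norm_sub_rev (b : ℂ)] at this
      linarith
    have := norm_pos_iff.2 (ofReal_sub_ne_zero hω x)
    rw [mem_ofPred_eq, norm_inv, inv_pow]
    gcongr
  have hmarkov := mul_meas_ge_le_integral_of_nonneg (μ := μ)
    (ae_of_all _ fun x : ℝ => sq_nonneg ‖((x : ℂ) - ω)⁻¹‖)
    (integrable_sq_norm_inv_ofReal_sub hω) ((2 * ‖ω - b‖) ^ 2)⁻¹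
  rw [← Inu_eq_integral_sq_norm] at hmarkov
  calc μ.real (Metric.ball b ‖ω - b‖) / ‖ω - b‖ ^ 2
      = 4 * (((2 * ‖ω - b‖) ^ 2)⁻¹ * μ.real (Metric.ball b ‖ω - b‖)) := by field
    _ ≤ 4 * Inu μ ω := by
      gcongr
      exact (mul_le_mul_of_nonneg_left (measureReal_mono hsub) (by positivity)).trans hmarkov

theorem tendsto_Inu_atTop [IsFiniteMeasure μ]
    (hb : Tendsto (fun r => μ.real (Metric.ball b r) / r ^ 2) (𝓝[>] 0) atTop) :
    Tendsto (Inu μ) (𝓝[{z | 0 < z.im}] (b : ℂ)) atTop := by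
  refine Tendsto.atTop_of_const_mul₀ (four_pos : (0 : ℝ) < 4) (tendsto_atTop_mono' _ ?_
    (hb.comp (tendsto_norm_sub_ofReal_nhdsWithin_upperHalfPlane b)))
  filter_upwards [self_mem_nhdsWithin] with ω hω
  exact measureReal_ball_le_mul_Inu (ne_of_gt hω) b

theorem tendsto_measureReal_ball_zero [IsFiniteMeasure μ] [NullSingletonClass μ] (b : ℝ) :
    Tendsto (fun r => μ.real (Metric.ball b r)) (𝓝[>] 0) (𝓝 0) := by
  have h := tendsto_measure_thickening_of_isClosed (μ := μ) (s := {b})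
    ⟨1, one_pos, measure_ne_top _ _⟩ isClosed_singleton
  simp only [Metric.thickening_singleton, measure_singleton] at h
  exact (ENNReal.tendsto_toReal ENNReal.zero_ne_top).comp h

theorem sq_norm_mTr_le [IsProbabilityMeasure μ] {δ : ℝ} (hω : ω.im ≠ 0) (hδ : 0 < δ)
    (hωb : ‖ω - b‖ ≤ δ / 2) :
    ‖mTr μ ω‖ ^ 2 ≤ 2 * (μ.real (Metric.ball b δ) * Inu μ ω + (2 / δ) ^ 2) := by
  set B := Metric.ball b δ
  have hint := integrable_inv_ofReal_sub (μ := μ) hω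
  have hnear : ‖∫ x : ℝ in B, ((x : ℂ) - ω)⁻¹ ∂μ‖ ^ 2 ≤ μ.real B * Inu μ ω := by
    have hCS := sq_norm_integral_mul_le (memLp_const (1 : ℂ))
      (memLp_inv_ofReal_sub (μ := μ.restrict B) hω 2)
    simp only [one_mul, norm_one, one_pow, integral_const, smul_eq_mul, mul_one,
      measureReal_restrict_apply_univ] at hCS
    refine hCS.trans (mul_le_mul_of_nonneg_left ?_ measureReal_nonneg)
    rw [Inu_eq_integral_sq_norm]
    exact setIntegral_le_integral (integrable_sq_norm_inv_ofReal_sub hω)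
      (ae_of_all _ fun x => sq_nonneg _)
  have hfar : ‖∫ x : ℝ in Bᶜ, ((x : ℂ) - ω)⁻¹ ∂μ‖ ≤ 2 / δ := by
    have hbound : ∀ x ∈ Bᶜ, ‖((x : ℂ) - ω)⁻¹‖ ≤ 2 / δ := by
      intro x hx
      have hxb : δ ≤ ‖(x : ℂ) - b‖ := by
        rw [← ofReal_sub, norm_real, ← dist_eq_norm]
        exact not_lt.1 hx
      have := norm_sub_le_norm_sub_add_norm_sub (x : ℂ) ω b
      rw [norm_inv, ← inv_div]
      exact inv_anti₀ (half_pos hδ) (by linarith)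
    refine (norm_setIntegral_le_of_norm_le_const (measure_lt_top _ _) hbound).trans ?_
    exact mul_le_of_le_one_right (by positivity) measureReal_le_one
  rw [mTr, ← integral_add_compl Metric.isOpen_ball.measurableSet hint]
  calc ‖(∫ x : ℝ in B, ((x : ℂ) - ω)⁻¹ ∂μ) + ∫ x : ℝ in Bᶜ, ((x : ℂ) - ω)⁻¹ ∂μ‖ ^ 2
      ≤ (‖∫ x : ℝ in B, ((x : ℂ) - ω)⁻¹ ∂μ‖ + ‖∫ x : ℝ in Bᶜ, ((x : ℂ) - ω)⁻¹ ∂μ‖) ^ 2 := by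
        gcongr
        exact norm_add_le _ _
    _ ≤ 2 * (‖∫ x : ℝ in B, ((x : ℂ) - ω)⁻¹ ∂μ‖ ^ 2 + ‖∫ x : ℝ in Bᶜ, ((x : ℂ) - ω)⁻¹ ∂μ‖ ^ 2) :=
        add_sq_le
    _ ≤ 2 * (μ.real B * Inu μ ω + (2 / δ) ^ 2) := by gcongr

theorem tendsto_sq_norm_mTr_div_Inu [IsProbabilityMeasure μ] [NullSingletonClass μ]
    (hb : Tendsto (fun r => μ.real (Metric.ball b r) / r ^ 2) (𝓝[>] 0) atTop) :
    Tendsto (fun ω => ‖mTr μ ω‖ ^ 2 / Inu μ ω) (𝓝[{z | 0 < z.im}] (b : ℂ)) (𝓝 0) := by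
  refine tendsto_order.2 ⟨fun ε hε => ?_, fun ε hε => ?_⟩
  · filter_upwards [self_mem_nhdsWithin] with ω hω
    have := Inu_pos (μ := μ) (ne_of_gt hω)
    exact hε.trans_le (by positivity)
  obtain ⟨δ, hmass, hδ⟩ := (((tendsto_measureReal_ball_zero (μ := μ) b).eventually_lt_const
    (show 0 < ε / 4 by positivity)).and self_mem_nhdsWithin).exists
  have hclose := ((tendsto_norm_sub_ofReal_nhdsWithin_upperHalfPlane b).mono_right
    nhdsWithin_le_nhds).eventually_le_const (half_pos hδ)
  filter_upwards [hclose, self_mem_nhdsWithin,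
    (tendsto_Inu_atTop hb).eventually_gt_atTop (4 / ε * (2 / δ) ^ 2)] with ω hωb hω hI
  have hI₀ := Inu_pos (μ := μ) (ne_of_gt hω)
  have hlarge : (2 / δ) ^ 2 < ε / 4 * Inu μ ω := by
    rw [div_mul_eq_mul_div, div_lt_iff₀ hε] at hI
    linarith
  have hsmall := mul_lt_mul_of_pos_right hmass hI₀
  rw [div_lt_iff₀ hI₀]
  linarith [sq_norm_mTr_le (μ := μ) (ne_of_gt hω) hδ hωb]

theorem tendsto_InuHat_atTop [IsProbabilityMeasure μ] [NullSingletonClass μ]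
    (hb : Tendsto (fun r => μ.real (Metric.ball b r) / r ^ 2) (𝓝[>] 0) atTop) :
    Tendsto (InuHat μ) (𝓝[{z | 0 < z.im}] (b : ℂ)) atTop := by
  have hpos : ∀ᶠ ω in 𝓝[{z | 0 < z.im}] (b : ℂ), ‖mTr μ ω‖ ^ 2 / Inu μ ω ∈ Ioi (0 : ℝ) := by
    filter_upwards [self_mem_nhdsWithin] with ω hω
    have hm := norm_pos_iff.2 (mTr_ne_zero (μ := μ) (ne_of_gt hω))
    have hI := Inu_pos (μ := μ) (ne_of_gt hω)
    exact mem_Ioi.2 (by positivity)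
  have hinv := (tendsto_nhdsWithin_iff.2
    ⟨tendsto_sq_norm_mTr_div_Inu hb, hpos⟩).inv_tendsto_nhdsGT_zero
  refine (tendsto_atTop_add_const_right _ (-1) hinv).congr fun ω => ?_
  rw [Pi.inv_apply, inv_div, InuHat, sub_eq_add_neg]

end SupportPoints

section Avoidance

variable {μ ν : Measure ℝ} [IsProbabilityMeasure μ] [IsProbabilityMeasure ν] {R : ℝ}

theorem IsSubordinationPoint.variance_mul_InuHat_le {w a z : ℂ}
    (h : IsSubordinationPoint μ ν w a z) (hR : ∀ᵐ x ∂ν, |x| ≤ R) :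
    ProbabilityTheory.variance id ν * InuHat μ w ≤ (R + ‖a‖) ^ 2 := by
  calc ProbabilityTheory.variance id ν * InuHat μ w
      ≤ InuHat ν a * (R + ‖a‖) ^ 2 * InuHat μ w :=
        mul_le_mul_of_nonneg_right (variance_le_InuHat_mul hR h.im_right_pos.ne')
          (InuHat_nonneg h.im_left_pos.ne')
    _ = InuHat μ w * InuHat ν a * (R + ‖a‖) ^ 2 := by ring
    _ ≤ 1 * (R + ‖a‖) ^ 2 := by
        gcongr
        exact h.InuHat_mul_InuHat_lt_one.le
    _ = (R + ‖a‖) ^ 2 := one_mul _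

theorem IsSubordinationPoint.variance_mul_Inu_le {w a z : ℂ}
    (h : IsSubordinationPoint μ ν w a z) (hR : ∀ᵐ x ∂ν, |x| ≤ R) (hR₀ : 0 ≤ R)
    (ha : 2 * R + 1 ≤ ‖a‖) :
    ProbabilityTheory.variance id ν * (Inu μ w - 4) ≤ 16 := by
  have hm₀ : ‖mTr μ w‖ ≠ 0 := norm_ne_zero_iff.2 (mTr_ne_zero h.im_left_pos.ne')
  have hVar := ProbabilityTheory.variance_nonneg id ν
  have ham : ‖mTr μ w‖ * ‖a‖ ≤ 2 := by
    have hnear : ‖a * mTr ν a + 1‖ ≤ 1 :=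
      (norm_mul_mTr_add_one_le hR (by linarith)).trans
        (mul_inv_le_one_of_le₀ (by linarith) (by linarith))
    have := norm_sub_le (a * mTr ν a + 1) 1
    rw [add_sub_cancel_right, norm_mul, norm_one] at this
    rw [h.mTr_eq]
    linarith
  have hm : ‖mTr μ w‖ ≤ 2 :=
    (le_mul_of_one_le_right (norm_nonneg _) (by linarith)).trans ham
  have hInu : Inu μ w = ‖mTr μ w‖ ^ 2 * (InuHat μ w + 1) := by
    rw [InuHat]
    field
  calc ProbabilityTheory.variance id ν * (Inu μ w - 4)
      = ‖mTr μ w‖ ^ 2 * (ProbabilityTheory.variance id ν * InuHat μ w)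
        + ProbabilityTheory.variance id ν * (‖mTr μ w‖ ^ 2 - 2 ^ 2) := by rw [hInu]; ring
    _ ≤ ‖mTr μ w‖ ^ 2 * (2 * ‖a‖) ^ 2 + 0 := by
        gcongr
        · exact (h.variance_mul_InuHat_le hR).trans (by gcongr; linarith)
        · exact mul_nonpos_of_nonneg_of_nonpos hVar (sub_nonpos.2 (by gcongr))
    _ = 4 * (‖mTr μ w‖ * ‖a‖) ^ 2 := by ring
    _ ≤ 4 * 2 ^ 2 := by gcongr
    _ = 16 := by norm_num

theorem not_tendsto_of_isSubordinationPoint [NullSingletonClass μ] [NullSingletonClass ν]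
    {ι : Type*} {l : Filter ι} [l.NeBot] {w a z : ι → ℂ} {b : ℝ}
    (h : ∀ᶠ i in l, IsSubordinationPoint μ ν (w i) (a i) (z i)) (hR : ∀ᵐ x ∂ν, |x| ≤ R)
    (hb : Tendsto (fun r => μ.real (Metric.ball b r) / r ^ 2) (𝓝[>] 0) atTop) :
    ¬ Tendsto w l (𝓝 (b : ℂ)) := by
  intro hw
  have hVar := variance_id_pos hR
  have hR₀ : 0 ≤ R := let ⟨_, hx⟩ := hR.exists; (abs_nonneg _).trans hx
  have hw' : Tendsto w l (𝓝[{z | 0 < z.im}] (b : ℂ)) :=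
    tendsto_nhdsWithin_iff.2 ⟨hw, h.mono fun _ hi => hi.im_left_pos⟩
  have hInu := ((tendsto_Inu_atTop hb).comp hw').eventually_gt_atTop
    (16 / ProbabilityTheory.variance id ν + 4)
  have hInuHat := ((tendsto_InuHat_atTop hb).comp hw').eventually_gt_atTop
    ((R + (2 * R + 1)) ^ 2 / ProbabilityTheory.variance id ν)
  obtain ⟨i, hi, hI, hIhat⟩ := (h.and (hInu.and hInuHat)).exists
  rw [Function.comp_apply, div_lt_iff₀' hVar] at hIhat
  rw [Function.comp_apply, ← lt_sub_iff_add_lt, div_lt_iff₀' hVar] at hI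
  rcases le_total (2 * R + 1) ‖a i‖ with ha | ha
  · exact (hi.variance_mul_Inu_le hR hR₀ ha).not_gt hI
  · refine (hi.variance_mul_InuHat_le hR).not_gt (lt_of_le_of_lt ?_ hIhat)
    gcongr

end Avoidance

section Analyticity

variable {μ : Measure ℝ} {ω : ℂ} {b δ : ℝ}

theorem exists_pos_ae_le_norm_ofReal_sub (hb : b ∉ μ.support) :
    ∃ δ > 0, ∀ᵐ x : ℝ ∂μ, δ ≤ ‖(x : ℂ) - b‖ := by
  obtain ⟨U, hU, hμU⟩ := Measure.notMem_support_iff_exists.1 hb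
  obtain ⟨δ, hδ, hball⟩ := Metric.mem_nhds_iff.1 hU
  refine ⟨δ, hδ, (measure_eq_zero_iff_ae_notMem.1 hμU).mono fun x hx => ?_⟩
  rw [← ofReal_sub, norm_real, ← dist_eq_norm]
  exact not_lt.1 fun h => hx (hball h)

variable [IsFiniteMeasure μ]

theorem hasDerivAt_mTr (hδ : 0 < δ) (h : ∀ᵐ x : ℝ ∂μ, δ ≤ ‖(x : ℂ) - ω‖) :
    HasDerivAt (mTr μ) (∫ x : ℝ, (((x : ℂ) - ω) ^ 2)⁻¹ ∂μ) ω := by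
  have hgap : ∀ᵐ x : ℝ ∂μ, ∀ ζ ∈ Metric.ball ω (δ / 2), δ / 2 ≤ ‖(x : ℂ) - ζ‖ := by
    filter_upwards [h] with x hx ζ hζ
    rw [Metric.mem_ball, dist_eq_norm] at hζ
    linarith [norm_sub_le_norm_sub_add_norm_sub (x : ℂ) ζ ω]
  refine (hasDerivAt_integral_of_dominated_loc_of_deriv_le
    (F := fun ζ (x : ℝ) => ((x : ℂ) - ζ)⁻¹) (F' := fun ζ (x : ℝ) => (((x : ℂ) - ζ) ^ 2)⁻¹)
    (bound := fun _ => ((δ / 2) ^ 2)⁻¹) (Metric.ball_mem_nhds ω (half_pos hδ))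
    (Eventually.of_forall fun ζ => Measurable.aestronglyMeasurable (by fun_prop))
    (integrable_inv_ofReal_sub_of_le_norm hδ h)
    (Measurable.aestronglyMeasurable (by fun_prop)) ?_ (integrable_const _) ?_).2
  · filter_upwards [hgap] with x hx ζ hζ
    rw [norm_inv, norm_pow]
    have := hx ζ hζ
    gcongr
  · filter_upwards [hgap] with x hx ζ hζ
    have hne : (x : ℂ) - ζ ≠ 0 := norm_pos_iff.1 ((half_pos hδ).trans_le (hx ζ hζ))
    simpa using ((hasDerivAt_id ζ).const_sub (x : ℂ)).fun_inv hne

theorem analyticAt_mTr (hδ : 0 < δ) (h : ∀ᵐ x : ℝ ∂μ, δ ≤ ‖(x : ℂ) - ω‖) :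
    AnalyticAt ℂ (mTr μ) ω := by
  refine DifferentiableOn.analyticAt (s := Metric.ball ω (δ / 2)) (fun ζ hζ => ?_)
    (Metric.ball_mem_nhds ω (half_pos hδ))
  rw [Metric.mem_ball, dist_eq_norm] at hζ
  refine (hasDerivAt_mTr (half_pos hδ) ?_).differentiableAt.differentiableWithinAt
  filter_upwards [h] with x hx
  linarith [norm_sub_le_norm_sub_add_norm_sub (x : ℂ) ζ ω]

theorem analyticAt_mTr_of_im_ne_zero (hω : ω.im ≠ 0) : AnalyticAt ℂ (mTr μ) ω :=
  analyticAt_mTr (abs_pos.2 hω) (ae_of_all _ (abs_im_le_norm_ofReal_sub ω))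

theorem analyticAt_mTr_of_notMem_support (hb : b ∉ μ.support) : AnalyticAt ℂ (mTr μ) b :=
  let ⟨_, hδ, h⟩ := exists_pos_ae_le_norm_ofReal_sub hb
  analyticAt_mTr hδ h

theorem deriv_mTr_ne_zero_of_notMem_support [NeZero μ] (hb : b ∉ μ.support) :
    deriv (mTr μ) b ≠ 0 := by
  obtain ⟨δ, hδ, h⟩ := exists_pos_ae_le_norm_ofReal_sub hb
  have hreal (x : ℝ) : (((x : ℂ) - b) ^ 2)⁻¹ = (((x - b) ^ 2)⁻¹ : ℝ) := by push_cast; rfl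
  have hnorm {x : ℝ} (hx : δ ≤ ‖(x : ℂ) - b‖) : δ ≤ |x - b| := by
    rwa [← ofReal_sub, norm_real] at hx
  have hint : Integrable (fun x : ℝ => ((x - b) ^ 2)⁻¹) μ := by
    refine Integrable.of_bound (Measurable.aestronglyMeasurable (by fun_prop)) (δ ^ 2)⁻¹ ?_
    filter_upwards [h] with x hx
    rw [Real.norm_of_nonneg (by positivity), ← sq_abs (x - b)]
    have := hnorm hx
    gcongr
  rw [(hasDerivAt_mTr hδ h).deriv]
  simp only [hreal]
  rw [integral_complex_ofReal, ofReal_ne_zero]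
  intro hzero
  rw [integral_eq_zero_iff_of_nonneg (fun x => by positivity) hint] at hzero
  obtain ⟨x, hx₀, hx⟩ := (hzero.and h).exists
  simp only [Pi.zero_apply, inv_eq_zero, sq_eq_zero_iff] at hx₀
  have := hnorm hx
  rw [hx₀, abs_zero] at this
  exact this.not_gt hδ

end Analyticity

section MomentTransform

/-- The moment generating function `ψ_μ(u) = ∫ (1 - u x)⁻¹ dμ(x)`: the Cauchy–Stieltjes transform
in the coordinate `u = 1 / ω` at infinity, divided by its simple zero. -/
def momentTransform (μ : Measure ℝ) (u : ℂ) : ℂ := ∫ x : ℝ, (1 - u * x)⁻¹ ∂μ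

variable {μ : Measure ℝ} {u : ℂ} {R : ℝ}

theorem mTr_inv (hu : u ≠ 0) : mTr μ u⁻¹ = -u * momentTransform μ u := by
  rw [mTr, momentTransform, ← integral_const_mul]
  refine integral_congr_ae (ae_of_all _ fun x => ?_)
  have hfactor : (x : ℂ) - u⁻¹ = -u⁻¹ * (1 - u * x) := by field
  simp only [hfactor, mul_inv, inv_neg, inv_inv]

variable [IsProbabilityMeasure μ]

theorem momentTransform_zero : momentTransform μ 0 = 1 := by
  simp [momentTransform]

theorem analyticAt_momentTransform_zero (hR : ∀ᵐ x ∂μ, |x| ≤ R) :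
    AnalyticAt ℂ (momentTransform μ) 0 := by
  have heq {u : ℂ} (hu : u ≠ 0) : -(u⁻¹ * mTr μ u⁻¹) = momentTransform μ u := by
    rw [mTr_inv hu, neg_mul, mul_neg, neg_neg, inv_mul_cancel_left₀ hu]
  refine analyticAt_of_differentiable_on_punctured_nhds_of_continuousAt ?_ ?_
  · have hfar := (tendsto_norm_cobounded_atTop.comp
      (tendsto_inv₀_nhdsNE_zero (α := ℂ))).eventually_gt_atTop R
    filter_upwards [hfar, self_mem_nhdsWithin] with u hu hu₀
    have hd : DifferentiableAt ℂ (mTr μ) u⁻¹ := (hasDerivAt_mTr (sub_pos.2 hu)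
      (hR.mono fun x hx => sub_le_norm_ofReal_sub hx _)).differentiableAt
    have hinv := differentiableAt_inv (𝕜 := ℂ) hu₀
    exact (hinv.mul (hd.comp u hinv)).neg.congr_of_eventuallyEq
      ((eventually_ne_nhds hu₀).mono fun _ h => (heq h).symm)
  · rw [continuousAt_iff_punctured_nhds, momentTransform_zero]
    have hlim := ((tendsto_mul_mTr_cobounded hR).comp tendsto_inv₀_nhdsNE_zero).neg
    rw [neg_neg] at hlim
    exact hlim.congr' (eventually_mem_nhdsWithin.mono fun _ h => heq h)

end MomentTransform

section RTransform

/-- A germ at `m₀` of the function `K(m) = -1/m - m_ν⁻¹(m)`, that is `K(m) = -R_ν(-m)` for the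
R-transform of `ν`, along the branch of the inverse of `m_ν` determined by the filter `l`, which is
the neighbourhood filter of a point of regularity of `m_ν` or the filter at infinity. -/
structure IsRTransformBranch (ν : Measure ℝ) (K : ℂ → ℂ) (m₀ : ℂ) (l : Filter ℂ) : Prop where
  analyticAt : AnalyticAt ℂ K m₀
  tendsto : Tendsto (mTr ν) l (𝓝 m₀)
  eventually_eq : ∀ᶠ ω in l, K (mTr ν ω) = FTr ν ω - ω
  eventually_exists : ∀ᶠ m in 𝓝[≠] m₀, ∃ ω, mTr ν ω = m ∧ K m = FTr ν ω - ω

theorem exists_analyticAt_local_inverse {f : ℂ → ℂ} {x : ℂ} (hf : AnalyticAt ℂ f x)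
    (hf' : deriv f x ≠ 0) :
    ∃ g : ℂ → ℂ, AnalyticAt ℂ g (f x) ∧ (∀ᶠ w in 𝓝 x, g (f w) = w) ∧
      ∀ᶠ m in 𝓝 (f x), f (g m) = m :=
  ⟨_, hf.analyticAt_localInverse hf', hf.hasStrictDerivAt.eventually_left_inverse hf',
    hf.hasStrictDerivAt.eventually_right_inverse hf'⟩

variable {ν : Measure ℝ}

theorem exists_isRTransformBranch_nhds [IsFiniteMeasure ν] [NeZero ν] {a : ℝ}
    (ha : a ∉ ν.support) (hm : mTr ν a ≠ 0) :
    ∃ K, IsRTransformBranch ν K (mTr ν a) (𝓝 (a : ℂ)) := by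
  have hana := analyticAt_mTr_of_notMem_support ha
  obtain ⟨g, hg, hleft, hright⟩ :=
    exists_analyticAt_local_inverse hana (deriv_mTr_ne_zero_of_notMem_support ha)
  refine ⟨fun m => -m⁻¹ - g m, (analyticAt_inv hm).neg.sub hg, hana.continuousAt, ?_, ?_⟩
  · filter_upwards [hleft] with ω hω
    rw [hω, FTr]
  · filter_upwards [nhdsWithin_le_nhds hright] with m hm
    exact ⟨g m, hm, by rw [FTr, hm]⟩

theorem exists_analyticAt_FTr_inv_sub [IsProbabilityMeasure ν] {R : ℝ}
    (hR : ∀ᵐ x ∂ν, |x| ≤ R) :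
    ∃ k : ℂ → ℂ, AnalyticAt ℂ k 0 ∧ ∀ u ≠ 0, k u = FTr ν u⁻¹ - u⁻¹ := by
  have hψ := analyticAt_momentTransform_zero hR
  obtain ⟨p, hp⟩ := hψ.inv (momentTransform_zero.trans_ne one_ne_zero)
  refine ⟨_, ⟨_, hp.has_fpower_series_dslope_fslope⟩, fun u hu => ?_⟩
  rw [dslope_of_ne _ hu, slope_def_field, FTr, mTr_inv hu, Pi.inv_apply, Pi.inv_apply,
    momentTransform_zero, neg_mul, inv_neg, neg_neg, mul_inv]
  ring

theorem exists_isRTransformBranch_cobounded [IsProbabilityMeasure ν] {R : ℝ}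
    (hR : ∀ᵐ x ∂ν, |x| ≤ R) :
    ∃ K, IsRTransformBranch ν K 0 (Bornology.cobounded ℂ) := by
  obtain ⟨k, hk, hkF⟩ := exists_analyticAt_FTr_inv_sub hR
  set n : ℂ → ℂ := fun u => -u * momentTransform ν u with hn
  have hn₀ : n 0 = 0 := by simp [hn]
  have hψ := analyticAt_momentTransform_zero hR
  have hn' : deriv n 0 = -1 := by
    have := (hasDerivAt_neg (0 : ℂ)).mul hψ.differentiableAt.hasDerivAt
    rw [neg_zero, zero_mul, add_zero, momentTransform_zero, mul_one] at this
    exact this.deriv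
  obtain ⟨g, hg, hleft, hright⟩ := exists_analyticAt_local_inverse
    (f := n) (x := 0) (analyticAt_id.neg.mul hψ) (by rw [hn']; norm_num)
  have hg₀ : g 0 = 0 := by simpa only [hn₀] using hleft.self_of_nhds
  rw [hn₀] at hg hright
  refine ⟨k ∘ g, AnalyticAt.comp (hg₀.symm ▸ hk) hg, tendsto_mTr_cobounded hR, ?_, ?_⟩
  · filter_upwards [tendsto_inv₀_cobounded.eventually hleft,
      Bornology.eventually_ne_cobounded (0 : ℂ)] with ω hω hω₀
    have hmω : mTr ν ω = n ω⁻¹ := by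
      simpa only [inv_inv] using mTr_inv (μ := ν) (inv_ne_zero hω₀)
    rw [Function.comp_apply, hmω, hω, hkF _ (inv_ne_zero hω₀), inv_inv]
  · filter_upwards [nhdsWithin_le_nhds hright, self_mem_nhdsWithin] with m hm hm₀
    have hgm : g m ≠ 0 := fun h => hm₀ (by rw [← hm, h, hn₀]; rfl)
    refine ⟨(g m)⁻¹, ?_, hkF _ hgm⟩
    rw [mTr_inv hgm]
    exact hm

end RTransform

/-- The class of compactly supported, diffuse probability measures whose mass near every point of
the support dominates the square of the radius. It contains all measures with Jacobi-type densities
of exponents less than `1`. -/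
structure HasSuperquadraticMass (μ : Measure ℝ) : Prop extends
    IsProbabilityMeasure μ, NullSingletonClass μ where
  isCompact_support : IsCompact μ.support
  tendsto_mass : ∀ b ∈ μ.support,
    Tendsto (fun r => μ.real (Metric.ball b r) / r ^ 2) (𝓝[>] 0) atTop

section BoundaryLimits

theorem exists_tendsto_nhds_or_tendsto_cobounded {ι : Type*} (l : Ultrafilter ι) (f : ι → ℂ) :
    (∃ c, Tendsto f l (𝓝 c)) ∨ Tendsto f l (Bornology.cobounded ℂ) := by
  by_cases h : ∃ s ∈ l.map f, Bornology.IsBounded s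
  · obtain ⟨s, hs, hbdd⟩ := h
    obtain ⟨c, -, hc⟩ := hbdd.isCompact_closure.ultrafilter_le_nhds' (l.map f)
      (mem_of_superset hs subset_closure)
    exact Or.inl ⟨c, hc⟩
  · push Not at h
    refine Or.inr fun s hs => ?_
    by_contra hnot
    exact h sᶜ (Ultrafilter.compl_mem_iff_notMem.2 hnot) (Bornology.isBounded_compl_iff.2 hs)

variable {ι : Type*} {l : Filter ι} {μ ν : Measure ℝ} {w a z : ι → ℂ} {c E₀ : ℂ}

theorem im_eq_zero_of_tendsto_im_mTr [l.NeBot] [IsFiniteMeasure μ] [NeZero μ]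
    (hw : Tendsto w l (𝓝 c)) (him : Tendsto (fun i => (mTr μ (w i)).im) l (𝓝 0)) :
    c.im = 0 := by
  by_contra hc
  have hlim := (continuous_im.tendsto _).comp
    ((analyticAt_mTr_of_im_ne_zero (μ := μ) hc).continuousAt.tendsto.comp hw)
  exact hc (mTr_im_eq_zero_iff.1 (tendsto_nhds_unique hlim him))

theorem exists_tendsto_notMem_support_or_tendsto_cobounded {l : Ultrafilter ι}
    (hμ : HasSuperquadraticMass μ) (hν : HasSuperquadraticMass ν)
    (h : ∀ᶠ i in l, IsSubordinationPoint μ ν (w i) (a i) (z i))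
    (him : Tendsto (fun i => (mTr μ (w i)).im) l (𝓝 0)) :
    (∃ b : ℝ, b ∉ μ.support ∧ Tendsto w l (𝓝 (b : ℂ))) ∨
      Tendsto w l (Bornology.cobounded ℂ) := by
  have := hμ.toIsProbabilityMeasure
  have := hμ.toNullSingletonClass
  have := hν.toIsProbabilityMeasure
  have := hν.toNullSingletonClass
  refine (exists_tendsto_nhds_or_tendsto_cobounded l w).imp_left fun ⟨c, hc⟩ => ⟨c.re, ?_, ?_⟩
  all_goals
    have hreal : (c.re : ℂ) = c := Complex.ext rfl (im_eq_zero_of_tendsto_im_mTr hc him).symm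
    rw [← hreal] at hc
  · obtain ⟨R, hR⟩ := exists_ae_abs_le_of_isCompact_support hν.isCompact_support
    exact fun hmem => not_tendsto_of_isSubordinationPoint h hR (hμ.tendsto_mass _ hmem) hc
  · exact hc

theorem mTr_ne_zero_of_tendsto [l.NeBot] [IsFiniteMeasure μ] [NeZero μ] {a₀ : ℂ}
    (h : ∀ᶠ i in l, IsSubordinationPoint μ ν (w i) (a i) (z i)) (hw : Tendsto w l (𝓝 c))
    (ha : Tendsto a l (𝓝 a₀)) (hz : Tendsto z l (𝓝 E₀)) (hc : ContinuousAt (mTr μ) c) :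
    mTr μ c ≠ 0 := by
  intro hzero
  have hlim := ((hw.add ha).sub hz).mul (hc.tendsto.comp hw)
  have hone := tendsto_nhds_unique hlim
    (tendsto_const_nhds.congr' (h.mono fun _ hi => hi.add_sub_mul_mTr.symm))
  rw [hzero, mul_zero] at hone
  norm_num at hone

theorem not_tendsto_cobounded_of_tendsto_cobounded [l.NeBot] [IsProbabilityMeasure μ]
    [IsProbabilityMeasure ν] (hμ : IsCompact μ.support) (hν : IsCompact ν.support)
    (h : ∀ᶠ i in l, IsSubordinationPoint μ ν (w i) (a i) (z i)) (hz : Tendsto z l (𝓝 E₀))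
    (hw : Tendsto w l (Bornology.cobounded ℂ)) : ¬ Tendsto a l (Bornology.cobounded ℂ) := by
  intro ha
  obtain ⟨R, hR⟩ := exists_ae_abs_le_of_isCompact_support hμ
  obtain ⟨Q, hQ⟩ := exists_ae_abs_le_of_isCompact_support hν
  have hlim := (((tendsto_mul_mTr_cobounded hR).comp hw).add
    ((tendsto_mul_mTr_cobounded hQ).comp ha)).sub (hz.mul ((tendsto_mTr_cobounded hR).comp hw))
  have heq : ∀ᶠ i in l, w i * mTr μ (w i) + a i * mTr ν (a i) - z i * mTr μ (w i) = -1 := by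
    filter_upwards [h] with i hi
    rw [← hi.mTr_eq, ← hi.add_sub_mul_mTr]
    ring
  have hone := tendsto_nhds_unique (hlim.congr' heq) tendsto_const_nhds
  norm_num at hone

theorem exists_isRTransformBranch_of_tendsto [l.NeBot] [IsProbabilityMeasure μ]
    [IsProbabilityMeasure ν] (hν : IsCompact ν.support)
    (h : ∀ᶠ i in l, IsSubordinationPoint μ ν (w i) (a i) (z i)) (hz : Tendsto z l (𝓝 E₀))
    {b : ℝ} (hb : b ∉ μ.support) (hw : Tendsto w l (𝓝 (b : ℂ)))
    (ha : (∃ a₀ : ℝ, a₀ ∉ ν.support ∧ Tendsto a l (𝓝 (a₀ : ℂ))) ∨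
      Tendsto a l (Bornology.cobounded ℂ)) :
    ∃ K l', IsRTransformBranch ν K (mTr μ b) l' ∧ Tendsto a l l' := by
  have hcont := (analyticAt_mTr_of_notMem_support hb).continuousAt
  have hlim : Tendsto (fun i => mTr ν (a i)) l (𝓝 (mTr μ b)) :=
    (hcont.tendsto.comp hw).congr' (h.mono fun _ hi => hi.mTr_eq)
  rcases ha with ⟨a₀, ha₀, ha⟩ | ha
  · have heq : mTr ν a₀ = mTr μ b := tendsto_nhds_unique
      ((analyticAt_mTr_of_notMem_support ha₀).continuousAt.tendsto.comp ha) hlim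
    obtain ⟨K, hK⟩ := exists_isRTransformBranch_nhds ha₀
      (heq ▸ mTr_ne_zero_of_tendsto h hw ha hz hcont)
    exact ⟨K, _, heq ▸ hK, ha⟩
  · obtain ⟨R, hR⟩ := exists_ae_abs_le_of_isCompact_support hν
    have heq : 0 = mTr μ b := tendsto_nhds_unique ((tendsto_mTr_cobounded hR).comp ha) hlim
    obtain ⟨K, hK⟩ := exists_isRTransformBranch_cobounded hR
    exact ⟨K, _, heq ▸ hK, ha⟩

end BoundaryLimits

section BoundaryInverse

/-- `Z` is an analytic local inverse at the real point `m₀` of the boundary extension of `M` to the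
real point `E₀`. The last condition excludes branches that do not meet the upper half-plane. -/
structure IsBoundaryInverse (M Z : ℂ → ℂ) (m₀ E₀ : ℝ) : Prop where
  analyticAt : AnalyticAt ℂ Z m₀
  map_base : Z m₀ = E₀
  eventually_im_eq_zero : ∀ᶠ m in 𝓝[≠] (m₀ : ℂ), m.im = 0 → (Z m).im = 0
  eventually_map_eq : ∀ᶠ m in 𝓝 (m₀ : ℂ), 0 < m.im → 0 < (Z m).im → M (Z m) = m
  frequently_im_pos : ∃ᶠ m in 𝓝 (m₀ : ℂ), 0 < m.im ∧ 0 < (Z m).im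

variable {μ ν ρ : Measure ℝ} {ωa ωb : ℂ → ℂ} {E₀ : ℝ}

theorem IsSubordinationPoint.of_mTr_eq [IsFiniteMeasure μ] [NeZero μ] [IsFiniteMeasure ν]
    [NeZero ν] {w a m : ℂ} (hw : mTr μ w = m) (ha : mTr ν a = m) (hm : 0 < m.im)
    (hz : 0 < (w - (FTr ν a - a)).im) :
    IsSubordinationPoint μ ν w a (w - (FTr ν a - a)) where
  im_pos := hz
  im_left_pos := mTr_im_pos_iff.1 (hw ▸ hm)
  im_right_pos := mTr_im_pos_iff.1 (ha ▸ hm)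
  mTr_eq := hw.trans ha.symm
  add_sub_eq := by
    rw [FTr, FTr, hw, ha]
    ring

/-- The local inverse is `Z = m_μ⁻¹ - K`: by the subordination equation, `m = m_μ(w)` implies
`z = w - (F_ν(a) - a)`. -/
theorem exists_isBoundaryInverse_of_isRTransformBranch [IsProbabilityMeasure μ]
    [IsProbabilityMeasure ν] (hsub : IsPairSubordination μ ν ωa ωb) (hρ : IsFreeConv μ ν ωb ρ)
    {l l' : Filter ℂ} [l.NeBot] (hl : l ≤ 𝓝[{z | 0 < z.im}] (E₀ : ℂ)) {b : ℝ}
    (hb : b ∉ μ.support) (hωb : Tendsto ωb l (𝓝 (b : ℂ))) {K : ℂ → ℂ}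
    (hK : IsRTransformBranch ν K (mTr μ b) l') (hωa : Tendsto ωa l l') :
    ∃ Z, IsBoundaryInverse (mTr ρ) Z (mTr μ b).re E₀ := by
  have hana := analyticAt_mTr_of_notMem_support hb
  obtain ⟨g, hg, hleft, hright⟩ :=
    exists_analyticAt_local_inverse hana (deriv_mTr_ne_zero_of_notMem_support hb)
  have him₀ : (mTr μ b).im = 0 := mTr_im_of_im_eq_zero (ofReal_im b)
  have hm₀ : ((mTr μ b).re : ℂ) = mTr μ b := Complex.ext rfl him₀.symm
  have hpos : ∀ᶠ z : ℂ in l, 0 < z.im := hl self_mem_nhdsWithin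
  have hlim : Tendsto (fun z => mTr μ (ωb z)) l (𝓝 (mTr μ b)) := hana.continuousAt.tendsto.comp hωb
  have hZ : ∀ᶠ z in l, g (mTr μ (ωb z)) - K (mTr μ (ωb z)) = z := by
    filter_upwards [hpos, hωb.eventually hleft, hωa.eventually hK.eventually_eq] with z hz hgz hKz
    have hsol := hsub.isSubordinationPoint hz
    rw [hgz, hsol.mTr_eq, hKz, hsol.symm.FTr_sub]
    ring
  refine ⟨fun m => g m - K m, ?_, ?_, ?_, ?_, ?_⟩ <;> rw [hm₀]
  · exact hg.sub hK.analyticAt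
  · exact tendsto_nhds_unique
      ((hg.sub hK.analyticAt).continuousAt.tendsto.comp hlim)
      ((tendsto_id'.2 (hl.trans nhdsWithin_le_nhds)).congr' (hZ.mono fun _ hz => hz.symm))
  · filter_upwards [hK.eventually_exists, nhdsWithin_le_nhds hright] with m ⟨a, ha, hKm⟩ hgm hm
    have hgim := mTr_im_eq_zero_iff.1 (hgm.symm ▸ hm)
    have haim := mTr_im_eq_zero_iff.1 (ha.symm ▸ hm)
    rw [hKm, sub_im, sub_im, FTr_im, hgim, haim]
    ring
  · filter_upwards [eventually_nhdsWithin_iff.1 hK.eventually_exists, hright] with m hex hgm hm hz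
    obtain ⟨a, ha, hKm⟩ := hex fun h => hm.ne' (h ▸ him₀)
    rw [hKm] at hz ⊢
    rw [hρ.2 _ hz, ← (IsSubordinationPoint.of_mTr_eq hgm ha hm hz).left_unique
      (hsub.isSubordinationPoint hz), hgm]
  · refine hlim.frequently (Eventually.frequently ?_)
    filter_upwards [hpos, hZ] with z hz hZz
    exact ⟨mTr_im_pos_iff.2 (hsub.isSubordinationPoint hz).im_left_pos, hZz.symm ▸ hz⟩

theorem nhdsWithin_upperHalfPlane_neBot (E₀ : ℝ) : (𝓝[{z : ℂ | 0 < z.im}] (E₀ : ℂ)).NeBot := by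
  rw [← mem_closure_iff_nhdsWithin_neBot, Complex.closure_setOfPred_lt_im]
  exact (ofReal_im E₀).ge

theorem exists_isBoundaryInverse (hμ : HasSuperquadraticMass μ) (hν : HasSuperquadraticMass ν)
    (hsub : IsPairSubordination μ ν ωa ωb) (hρ : IsFreeConv μ ν ωb ρ)
    (him : Tendsto (fun z => (mTr ρ z).im) (𝓝[{z | 0 < z.im}] (E₀ : ℂ)) (𝓝 0)) :
    ∃ Z m₀, IsBoundaryInverse (mTr ρ) Z m₀ E₀ := by
  have := hμ.toIsProbabilityMeasure
  have := hν.toIsProbabilityMeasure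
  have := nhdsWithin_upperHalfPlane_neBot E₀
  set l := Ultrafilter.of (𝓝[{z : ℂ | 0 < z.im}] (E₀ : ℂ))
  have hl : (l : Filter ℂ) ≤ 𝓝[{z | 0 < z.im}] (E₀ : ℂ) := Ultrafilter.of_le _
  have hz : Tendsto id (l : Filter ℂ) (𝓝 (E₀ : ℂ)) := hl.trans nhdsWithin_le_nhds
  have hpos : ∀ᶠ z : ℂ in l, 0 < z.im := hl self_mem_nhdsWithin
  have hsol : ∀ᶠ z in l, IsSubordinationPoint μ ν (ωb z) (ωa z) z :=
    hpos.mono fun _ => hsub.isSubordinationPoint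
  have hsol' : ∀ᶠ z in l, IsSubordinationPoint ν μ (ωa z) (ωb z) z := hsol.mono fun _ h => h.symm
  have hρ' := hsub.isFreeConv_symm hρ
  have hb := exists_tendsto_notMem_support_or_tendsto_cobounded hμ hν hsol
    ((him.mono_left hl).congr' (hpos.mono fun z hz => by rw [hρ.2 z hz]))
  have ha := exists_tendsto_notMem_support_or_tendsto_cobounded hν hμ hsol'
    ((him.mono_left hl).congr' (hpos.mono fun z hz => by rw [hρ'.2 z hz]))
  rcases hb with ⟨b, hbs, hb⟩ | hb
  · obtain ⟨K, l', hK, hωa⟩ :=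
      exists_isRTransformBranch_of_tendsto hν.isCompact_support hsol hz hbs hb ha
    obtain ⟨Z, hZ⟩ :=
      exists_isBoundaryInverse_of_isRTransformBranch hsub hρ hl hbs hb hK hωa
    exact ⟨Z, _, hZ⟩
  · rcases ha with ⟨a, has, ha⟩ | ha
    · obtain ⟨K, l', hK, hωb⟩ := exists_isRTransformBranch_of_tendsto
        hμ.isCompact_support hsol' hz has ha (Or.inr hb)
      obtain ⟨Z, hZ⟩ :=
        exists_isBoundaryInverse_of_isRTransformBranch hsub.symm hρ' hl has ha hK hωb
      exact ⟨Z, _, hZ⟩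
    · exact (not_tendsto_cobounded_of_tendsto_cobounded hμ.isCompact_support
        hν.isCompact_support hsol hz hb ha).elim

end BoundaryInverse

section BoundaryDensity

open ProbabilityTheory

theorem intervalIntegral_cauchyPDFReal (x₀ : ℝ) {γ : NNReal} (hγ : γ ≠ 0) (a b : ℝ) :
    ∫ x in a..b, cauchyPDFReal x₀ γ x =
      Real.pi⁻¹ * (Real.arctan ((b - x₀) / γ) - Real.arctan ((a - x₀) / γ)) := by
  simp_rw [cauchyPDFReal_def', intervalIntegral.integral_const_mul]
  rw [intervalIntegral.integral_comp_sub_right (fun x => (1 + (x / (γ : ℝ)) ^ 2)⁻¹) x₀,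
    intervalIntegral.integral_comp_div (fun x => (1 + x ^ 2)⁻¹) (NNReal.coe_ne_zero.2 hγ),
    integral_inv_one_add_sq, smul_eq_mul, NNReal.coe_inv, mul_assoc,
    inv_mul_cancel_left₀ (NNReal.coe_ne_zero.2 hγ)]

theorem cauchyPDFReal_le_of_le_abs_sub {x₀ x δ : ℝ} (γ : NNReal) (hδ : 0 < δ)
    (hx : δ ≤ |x - x₀|) : cauchyPDFReal x₀ γ x ≤ Real.pi⁻¹ * γ * (δ ^ 2)⁻¹ := by
  have hsq : δ ^ 2 ≤ (x - x₀) ^ 2 := sq_abs (x - x₀) ▸ pow_le_pow_left₀ hδ.le hx 2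
  rw [cauchyPDFReal_def]
  gcongr
  nlinarith [sq_nonneg (γ : ℝ)]

variable {ι : Type*} {l : Filter ι} {x₀ : ι → ℝ} {γ : ι → NNReal} {E : ℝ}

theorem tendstoUniformlyOn_cauchyPDFReal (hx : Tendsto x₀ l (𝓝 E)) (hγ : Tendsto γ l (𝓝 0))
    {u : Set ℝ} (hu : u ∈ 𝓝 E) :
    TendstoUniformlyOn (fun i => cauchyPDFReal (x₀ i) (γ i)) 0 l uᶜ := by
  obtain ⟨δ, hδ, hball⟩ := Metric.mem_nhds_iff.1 hu
  have hbound : Tendsto (fun i => Real.pi⁻¹ * γ i * ((δ / 2) ^ 2)⁻¹) l (𝓝 0) := by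
    simpa using ((NNReal.tendsto_coe.2 hγ).const_mul Real.pi⁻¹).mul_const ((δ / 2) ^ 2)⁻¹
  rw [Metric.tendstoUniformlyOn_iff]
  intro ε hε
  filter_upwards [hbound.eventually (gt_mem_nhds hε),
    hx.eventually (Metric.ball_mem_nhds E (half_pos hδ))] with i hi hxi x hxu
  have hdist : δ ≤ |x - E| := not_lt.1 fun h => hxu (hball h)
  have hfar : δ / 2 ≤ |x - x₀ i| := by
    have := abs_sub_le x (x₀ i) E
    have : |x₀ i - E| < δ / 2 := hxi
    linarith
  have hnonneg : 0 ≤ cauchyPDFReal (x₀ i) (γ i) x := by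
    rw [cauchyPDFReal_def]
    positivity
  rw [Pi.zero_apply, dist_zero_left, Real.norm_of_nonneg hnonneg]
  exact (cauchyPDFReal_le_of_le_abs_sub _ (half_pos hδ) hfar).trans_lt hi

theorem tendsto_intervalIntegral_cauchyPDFReal (hx : Tendsto x₀ l (𝓝 E))
    (hγ : Tendsto γ l (𝓝[≠] 0)) {a b : ℝ} (ha : a < E) (hb : E < b) :
    Tendsto (fun i => ∫ x in a..b, cauchyPDFReal (x₀ i) (γ i) x) l (𝓝 1) := by
  have hinv : Tendsto (fun i => ((γ i : ℝ))⁻¹) l atTop := by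
    refine tendsto_inv_nhdsGT_zero.comp (tendsto_nhdsWithin_iff.2 ⟨?_, ?_⟩)
    · exact NNReal.tendsto_coe.2 (hγ.mono_right nhdsWithin_le_nhds)
    · exact (hγ.eventually self_mem_nhdsWithin).mono fun i hi =>
        NNReal.coe_pos.2 (pos_iff_ne_zero.2 hi)
  have hright := Real.tendsto_arctan_atTop.comp
    ((tendsto_const_nhds.sub hx).pos_mul_atTop (sub_pos.2 hb) hinv)
  have hleft := Real.tendsto_arctan_atBot.comp
    ((tendsto_const_nhds.sub hx).neg_mul_atTop (sub_neg.2 ha) hinv)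
  have hlim := ((hright.mono_right nhdsWithin_le_nhds).sub
    (hleft.mono_right nhdsWithin_le_nhds)).const_mul Real.pi⁻¹
  rw [sub_neg_eq_add, add_halves, inv_mul_cancel₀ Real.pi_ne_zero] at hlim
  refine hlim.congr' ?_
  filter_upwards [hγ.eventually self_mem_nhdsWithin] with i hi
  rw [intervalIntegral_cauchyPDFReal _ hi]
  rfl

theorem tendsto_integral_cauchyPDFReal_mul {ρ : ℝ → ℝ} (hint : Integrable ρ)
    (hcont : ContinuousAt ρ E) (hx : Tendsto x₀ l (𝓝 E)) (hγ : Tendsto γ l (𝓝[≠] 0)) :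
    Tendsto (fun i => ∫ x, cauchyPDFReal (x₀ i) (γ i) x * ρ x) l (𝓝 (ρ E)) := by
  refine tendsto_integral_peak_smul_of_integrable_of_tendsto measurableSet_Ioc
    (Ioc_mem_nhds (sub_one_lt E) (lt_add_one E)) measure_Ioc_lt_top.ne ?_ ?_ ?_ ?_ hint hcont
  · refine Eventually.of_forall fun i x => ?_
    rw [cauchyPDFReal_def]
    positivity
  · exact fun u hu hE => tendstoUniformlyOn_cauchyPDFReal hx
      (hγ.mono_right nhdsWithin_le_nhds) (hu.mem_nhds hE)
  · refine (tendsto_intervalIntegral_cauchyPDFReal hx hγ (sub_one_lt E)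
      (lt_add_one E)).congr fun i => ?_
    rw [intervalIntegral.integral_of_le (by linarith)]
  · exact Eventually.of_forall fun i => (stronglyMeasurable_cauchyPDFReal _ _).aestronglyMeasurable

/-- `ρ` is the density read off from the boundary values of a Cauchy–Stieltjes transform `M` by
Stieltjes inversion, `Im M / π → ρ` at the real line. The approach is unrestricted rather than
vertical, so that limits along curves can be evaluated. -/
def HasBoundaryDensity (M : ℂ → ℂ) (ρ : ℝ → ℝ) : Prop :=
  ∀ E : ℝ, Tendsto (fun z => (M z).im) (𝓝[{z | 0 < z.im}] (E : ℂ)) (𝓝 (Real.pi * ρ E))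

variable {ρ : ℝ → ℝ}

theorem mTr_withDensity_im (hmeas : Measurable ρ) (hnn : ∀ x, 0 ≤ ρ x)
    [IsFiniteMeasure (volume.withDensity fun x => ENNReal.ofReal (ρ x))] {z : ℂ} (hz : 0 < z.im) :
    (mTr (volume.withDensity fun x => ENNReal.ofReal (ρ x)) z).im =
      Real.pi * ∫ x, cauchyPDFReal z.re z.im.toNNReal x * ρ x := by
  rw [mTr_im, Inu, integral_withDensity_eq_integral_toReal_smul (by fun_prop)
    (ae_of_all _ fun x => ENNReal.ofReal_lt_top), ← integral_const_mul, ← integral_const_mul]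
  congr 1 with x
  rw [ENNReal.toReal_ofReal (hnn x), smul_eq_mul, normSq_apply, cauchyPDFReal_def,
    Real.coe_toNNReal _ hz.le, sub_re, sub_im, ofReal_re, ofReal_im, zero_sub, neg_mul_neg]
  field

theorem integrable_of_isFiniteMeasure_withDensity_ofReal (hmeas : Measurable ρ)
    (hnn : ∀ x, 0 ≤ ρ x)
    [IsFiniteMeasure (volume.withDensity fun x => ENNReal.ofReal (ρ x))] : Integrable ρ := by
  refine ⟨hmeas.aestronglyMeasurable, ?_⟩
  rw [hasFiniteIntegral_iff_ofReal (ae_of_all _ hnn), ← setLIntegral_univ,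
    ← withDensity_apply _ MeasurableSet.univ]
  exact measure_lt_top _ _

theorem hasBoundaryDensity_mTr_withDensity (hcont : Continuous ρ) (hnn : ∀ x, 0 ≤ ρ x)
    [IsFiniteMeasure (volume.withDensity fun x => ENNReal.ofReal (ρ x))] :
    HasBoundaryDensity (mTr (volume.withDensity fun x => ENNReal.ofReal (ρ x))) ρ := by
  intro E
  have hre : Tendsto re (𝓝[{z | 0 < z.im}] (E : ℂ)) (𝓝 E) :=
    (continuous_re.tendsto (E : ℂ)).mono_left nhdsWithin_le_nhds
  have him : Tendsto (fun z : ℂ => z.im.toNNReal) (𝓝[{z | 0 < z.im}] (E : ℂ)) (𝓝[≠] 0) := by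
    refine tendsto_nhdsWithin_iff.2 ⟨?_, ?_⟩
    · have := (continuous_real_toNNReal.comp continuous_im).tendsto (E : ℂ)
      simp only [Function.comp_apply, ofReal_im, Real.toNNReal_zero] at this
      exact this.mono_left nhdsWithin_le_nhds
    · exact eventually_mem_nhdsWithin.mono fun z hz => (Real.toNNReal_pos.2 hz).ne'
  refine ((tendsto_integral_cauchyPDFReal_mul (integrable_of_isFiniteMeasure_withDensity_ofReal
    hcont.measurable hnn) hcont.continuousAt hre him).const_mul Real.pi).congr' ?_
  filter_upwards [self_mem_nhdsWithin] with z hz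
  exact (mTr_withDensity_im hcont.measurable hnn hz).symm

theorem eq_zero_of_notMem_msupport_withDensity (hcont : Continuous ρ) (hnn : ∀ x, 0 ≤ ρ x)
    {x : ℝ} (hx : x ∉ msupport (volume.withDensity fun x => ENNReal.ofReal (ρ x))) : ρ x = 0 := by
  contrapose! hx with hne
  intro U hU hxU
  have hopen : IsOpen ({y | ENNReal.ofReal (ρ y) ≠ 0} ∩ U) :=
    (isOpen_ne_fun (ENNReal.continuous_ofReal.comp hcont) continuous_const).inter hU
  have hpos := hopen.measure_pos volume ⟨x, by simpa using (hnn x).lt_of_ne' hne, hxU⟩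
  rw [pos_iff_ne_zero, Ne, withDensity_apply_eq_zero (by fun_prop)]
  exact hpos.ne'

end BoundaryDensity

section LocalAnalysis

open Asymptotics

variable {M Z χ : ℂ → ℂ} {ρ : ℝ → ℝ} {m₀ E₀ κ : ℝ} {k : ℕ}

theorem IsBoundaryInverse.eventually_pi_mul_eq_im (h : IsBoundaryInverse M Z m₀ E₀)
    (hM : HasBoundaryDensity M ρ) :
    ∀ᶠ m₁ in 𝓝 (m₀ : ℂ), ∀ E : ℝ, Z m₁ = E → (∃ᶠ m in 𝓝 m₁, 0 < m.im ∧ 0 < (Z m).im) →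
      Real.pi * ρ E = m₁.im := by
  filter_upwards [eventually_eventually_nhds.2 h.eventually_map_eq,
    h.analyticAt.eventually_analyticAt] with m₁ hinv hana E hE hfreq
  set l := 𝓝 m₁ ⊓ 𝓟 {m | 0 < m.im ∧ 0 < (Z m).im}
  have : l.NeBot := frequently_mem_iff_neBot.1 hfreq
  have hmem : ∀ᶠ m in l, 0 < m.im ∧ 0 < (Z m).im := mem_inf_of_right (mem_principal_self _)
  have hle : l ≤ 𝓝 m₁ := inf_le_left
  have hZ : Tendsto Z l (𝓝[{z | 0 < z.im}] (E : ℂ)) :=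
    tendsto_nhdsWithin_iff.2 ⟨hE ▸ hana.continuousAt.tendsto.mono_left hle,
      hmem.mono fun _ hm => hm.2⟩
  refine tendsto_nhds_unique ((hM E).comp hZ)
    (((continuous_im.tendsto m₁).mono_left hle).congr' ?_)
  filter_upwards [hmem, hle hinv] with m hm hMZ
  rw [Function.comp_apply, hMZ hm.1 hm.2]

theorem IsBoundaryInverse.eventually_im_map_eq_zero (h : IsBoundaryInverse M Z m₀ E₀) :
    ∀ᶠ m in 𝓝 (m₀ : ℂ), m.im = 0 → (Z m).im = 0 := by
  filter_upwards [eventually_nhdsWithin_iff.1 h.eventually_im_eq_zero] with m hm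
  by_cases hm₀ : m = m₀
  · simp [hm₀, h.map_base]
  · exact hm hm₀

theorem eventually_mul_im_pos_of_hasStrictDerivAt {f : ℂ → ℂ} {x : ℝ}
    (hf : HasStrictDerivAt f (κ : ℂ) x) (hκ : κ ≠ 0)
    (hreal : ∀ᶠ m in 𝓝 (x : ℂ), m.im = 0 → (f m).im = 0) :
    ∀ᶠ m in 𝓝 (x : ℂ), 0 < m.im → 0 < κ * (f m).im := by
  have hκ' : 0 < |κ| := abs_pos.2 hκ
  have hre : Tendsto (fun m : ℂ => (m.re : ℂ)) (𝓝 (x : ℂ)) (𝓝 (x : ℂ)) := by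
    have : Continuous fun m : ℂ => (m.re : ℂ) := by fun_prop
    simpa using this.tendsto (x : ℂ)
  filter_upwards [(tendsto_id.prodMk_nhds hre).eventually
    (hf.hasStrictFDerivAt.isLittleO.def (half_pos hκ')), hre.eventually hreal] with m hm hmre him
  have hsub : m - (m.re : ℂ) = m.im * I := by
    apply Complex.ext <;> simp
  have hbound : |(f m).im - κ * m.im| ≤ |κ| / 2 * m.im := by
    simp only [id, hsub] at hm
    rw [norm_mul, norm_I, mul_one, norm_real, Real.norm_of_nonneg him.le] at hm
    refine le_trans (le_of_eq_of_le ?_ (abs_im_le_norm _)) hm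
    have hfre : (f m.re).im = 0 := hmre (ofReal_im _)
    simp [hfre, mul_comm]
  have hprod : |κ * (f m).im - κ ^ 2 * m.im| ≤ κ ^ 2 / 2 * m.im := by
    calc |κ * (f m).im - κ ^ 2 * m.im| = |κ| * |(f m).im - κ * m.im| := by
          rw [← abs_mul]; ring_nf
      _ ≤ |κ| * (|κ| / 2 * m.im) := by gcongr
      _ = κ ^ 2 / 2 * m.im := by rw [← sq_abs]; ring
  have hpos : 0 < κ ^ 2 / 2 * m.im := by positivity
  linarith [(abs_le.1 hprod).1]

theorem frequently_im_pos_nhds_ofReal (x : ℝ) : ∃ᶠ z in 𝓝 (x : ℂ), 0 < z.im := by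
  have := nhdsWithin_upperHalfPlane_neBot x
  have hmem : ∀ᶠ z in 𝓝[{z : ℂ | 0 < z.im}] (x : ℂ), 0 < z.im := self_mem_nhdsWithin
  exact hmem.frequently.filter_mono nhdsWithin_le_nhds

theorem IsBoundaryInverse.eventually_eq_zero_of_hasStrictDerivAt
    (h : IsBoundaryInverse M Z m₀ E₀) (hM : HasBoundaryDensity M ρ)
    (hZ : HasStrictDerivAt Z (κ : ℂ) m₀) (hκ : κ ≠ 0) : ∀ᶠ E in 𝓝 E₀, ρ E = 0 := by
  have hreal := h.eventually_im_map_eq_zero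
  have hsign := eventually_mul_im_pos_of_hasStrictDerivAt hZ hκ hreal
  have hκpos : 0 < κ := by
    obtain ⟨m, ⟨hm, hZm⟩, hs⟩ := (h.frequently_im_pos.and_eventually hsign).exists
    exact pos_of_mul_pos_left (hs hm) hZm.le
  have hmap : map (fun r : ℝ => (Z r).re) (𝓝 m₀) = 𝓝 E₀ := by
    have := hZ.real_of_complex.map_nhds_eq (by simpa using hκ)
    rwa [h.map_base, ofReal_re] at this
  have hof : Tendsto (fun r : ℝ => (r : ℂ)) (𝓝 m₀) (𝓝 (m₀ : ℂ)) := continuous_ofReal.tendsto m₀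
  rw [← hmap, eventually_map]
  filter_upwards [hof.eventually (h.eventually_pi_mul_eq_im hM), hof.eventually hreal,
    hof.eventually (eventually_eventually_nhds.2 hsign)] with r hr hZr hsr
  have hZreal : Z r = (Z r).re := Complex.ext rfl (hZr (ofReal_im r))
  have hfreq : ∃ᶠ m in 𝓝 (r : ℂ), 0 < m.im ∧ 0 < (Z m).im := by
    exact (frequently_im_pos_nhds_ofReal r).and_eventually hsr |>.mono
      fun m hm => ⟨hm.1, pos_of_mul_pos_right (hm.2 hm.1) hκpos.le⟩
  exact (mul_eq_zero.1 ((hr _ hZreal hfreq).trans (ofReal_im r))).resolve_left Real.pi_ne_zero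

/-- `χ` is a local coordinate, tangent to the identity, in which `Z` becomes the power map
`u ↦ E₀ + κ u ^ k`, where `κ` is real. -/
structure IsPowerNormalForm (Z χ : ℂ → ℂ) (m₀ E₀ κ : ℝ) (k : ℕ) : Prop where
  coeff_ne_zero : κ ≠ 0
  order_ne_zero : k ≠ 0
  analyticAt : AnalyticAt ℂ χ 0
  map_zero : χ 0 = m₀
  hasDerivAt : HasDerivAt χ 1 0
  eventually_eq : ∀ᶠ u in 𝓝 (0 : ℂ), Z (χ u) = E₀ + κ * u ^ k

/-- The coordinate is the inverse of `z ↦ (z - z₀) (g z / g z₀) ^ (1 / k)`. -/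
theorem exists_analyticAt_pow_mul_eq {g : ℂ → ℂ} {z₀ : ℂ} (hg : AnalyticAt ℂ g z₀)
    (hg₀ : g z₀ ≠ 0) (hk : k ≠ 0) :
    ∃ χ : ℂ → ℂ, AnalyticAt ℂ χ 0 ∧ χ 0 = z₀ ∧ HasDerivAt χ 1 0 ∧
      ∀ᶠ u in 𝓝 (0 : ℂ), (χ u - z₀) ^ k * g (χ u) = g z₀ * u ^ k := by
  set φ : ℂ → ℂ := fun z => (g z / g z₀) ^ (k : ℂ)⁻¹ with hφ
  set ψ : ℂ → ℂ := fun z => (z - z₀) * φ z with hψ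
  have hφana : AnalyticAt ℂ φ z₀ := (hg.div analyticAt_const hg₀).cpow analyticAt_const
    (by simp [div_self hg₀])
  have hψana : AnalyticAt ℂ ψ z₀ := (analyticAt_id.sub analyticAt_const).mul hφana
  have hψ₀ : ψ z₀ = 0 := by simp [hψ]
  have hψ' : HasDerivAt ψ 1 z₀ := by
    have := ((hasDerivAt_id z₀).sub_const z₀).fun_mul hφana.differentiableAt.hasDerivAt
    simpa [hφ, div_self hg₀] using this
  obtain ⟨χ, hχ, hleft, hright⟩ :=
    exists_analyticAt_local_inverse hψana (hψ'.deriv.trans_ne one_ne_zero)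
  rw [hψ₀] at hχ hright
  have hχ₀ : χ 0 = z₀ := hψ₀ ▸ hleft.self_of_nhds
  refine ⟨χ, hχ, hχ₀, ?_, ?_⟩
  · simpa using HasDerivAt.of_local_left_inverse hχ.continuousAt
      (hχ₀.symm ▸ hψ' : HasDerivAt ψ 1 (χ 0)) one_ne_zero hright
  · filter_upwards [hright] with u hu
    have hpow : u ^ k = (χ u - z₀) ^ k * (g (χ u) / g z₀) := by
      rw [← cpow_nat_inv_pow (g (χ u) / g z₀) hk, ← mul_pow]
      exact congrArg (· ^ k) hu.symm
    rw [hpow]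
    field

theorem im_eq_zero_of_eventually_eq_pow_smul {f g : ℂ → ℂ} {x y : ℝ}
    (hg : AnalyticAt ℂ g x) (hfg : ∀ᶠ z in 𝓝 (x : ℂ), f z - y = (z - x) ^ k • g z)
    (hreal : ∀ᶠ m in 𝓝 (x : ℂ), m.im = 0 → (f m).im = 0) : (g x).im = 0 := by
  have hof : Tendsto (fun r : ℝ => (r : ℂ)) (𝓝[≠] x) (𝓝 (x : ℂ)) :=
    (continuous_ofReal.tendsto x).mono_left nhdsWithin_le_nhds
  refine tendsto_nhds_unique
    ((continuous_im.tendsto _).comp (hg.continuousAt.tendsto.comp hof))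
    (tendsto_const_nhds.congr' ?_)
  filter_upwards [self_mem_nhdsWithin, hof.eventually hfg, hof.eventually hreal] with r hr heq him
  have hprod := congrArg im heq
  rw [sub_im, him (ofReal_im r), ofReal_im, sub_zero, smul_eq_mul, ← ofReal_sub, ← ofReal_pow,
    im_ofReal_mul] at hprod
  exact ((mul_eq_zero.1 hprod.symm).resolve_left (pow_ne_zero _ (sub_ne_zero.2 hr))).symm

theorem exists_isPowerNormalForm (hZ : AnalyticAt ℂ Z m₀) (hZ₀ : Z m₀ = E₀)
    (hreal : ∀ᶠ m in 𝓝 (m₀ : ℂ), m.im = 0 → (Z m).im = 0)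
    (hne : ∃ᶠ m in 𝓝 (m₀ : ℂ), Z m ≠ E₀) : ∃ χ κ k, IsPowerNormalForm Z χ m₀ E₀ κ k := by
  obtain ⟨k, g, hg, hg₀, hgk⟩ :=
    (hZ.sub (analyticAt_const (v := (E₀ : ℂ)))).exists_eventuallyEq_pow_smul_nonzero_iff.2
      fun h => hne (h.mono fun m hm => not_not.2 (sub_eq_zero.1 hm))
  have hk : k ≠ 0 := by
    rintro rfl
    have := hgk.self_of_nhds
    simp only [Pi.sub_apply, hZ₀, sub_self, pow_zero, one_smul] at this
    exact hg₀ this.symm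
  have hκ : ((g m₀).re : ℂ) = g m₀ :=
    Complex.ext rfl (im_eq_zero_of_eventually_eq_pow_smul hg hgk hreal).symm
  obtain ⟨χ, hχ, hχ₀, hχ', hχk⟩ := exists_analyticAt_pow_mul_eq hg hg₀ hk
  refine ⟨χ, (g m₀).re, k, ?_, hk, hχ, hχ₀, hχ', ?_⟩
  · exact fun h => hg₀ (by rw [← hκ, h, ofReal_zero])
  · filter_upwards [hχk, (hχ₀ ▸ hχ.continuousAt.tendsto).eventually hgk] with u hu hZu
    rw [hκ, ← hu]
    exact sub_eq_iff_eq_add'.1 hZu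

theorem IsBoundaryInverse.exists_isPowerNormalForm (h : IsBoundaryInverse M Z m₀ E₀) :
    ∃ χ κ k, IsPowerNormalForm Z χ m₀ E₀ κ k :=
  _root_.exists_isPowerNormalForm h.analyticAt h.map_base h.eventually_im_map_eq_zero
    (h.frequently_im_pos.mono fun _ hm heq => hm.2.ne' (heq ▸ ofReal_im E₀))

theorem IsPowerNormalForm.hasStrictDerivAt (h : IsPowerNormalForm Z χ m₀ E₀ κ 1)
    (hZ : AnalyticAt ℂ Z m₀) : HasStrictDerivAt Z (κ : ℂ) m₀ := by
  have hcomp := ((h.map_zero ▸ hZ.differentiableAt.hasDerivAt :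
    HasDerivAt Z (deriv Z m₀) (χ 0)).comp 0 h.hasDerivAt)
  have hlin : HasDerivAt (fun u : ℂ => E₀ + κ * u ^ 1) (κ : ℂ) 0 := by
    simpa using ((hasDerivAt_id (0 : ℂ)).const_mul (κ : ℂ)).const_add (E₀ : ℂ)
  have hderiv := hcomp.unique (hlin.congr_of_eventuallyEq h.eventually_eq)
  rw [mul_one] at hderiv
  exact hderiv ▸ hZ.hasStrictDerivAt

theorem frequently_im_pos_of_hasStrictDerivAt {f : ℂ → ℂ} {f' c : ℂ} {x : ℝ}
    (hf : HasStrictDerivAt f f' c) (hf' : f' ≠ 0) (hfc : f c = x) :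
    ∃ᶠ u in 𝓝 c, 0 < (f u).im := by
  have hmap := hf.map_nhds_eq hf'
  rw [hfc] at hmap
  have hfreq := frequently_im_pos_nhds_ofReal x
  rwa [← hmap, frequently_map] at hfreq

theorem isBigO_sub_sub_deriv_mul {f : ℂ → ℂ} {z₀ : ℂ} (hf : AnalyticAt ℂ f z₀) :
    (fun z => f z - f z₀ - (z - z₀) * deriv f z₀) =O[𝓝 z₀] fun z => (z - z₀) ^ 2 := by
  obtain ⟨p, hp⟩ := hf
  have hslope : AnalyticAt ℂ (dslope f z₀) z₀ := ⟨_, hp.has_fpower_series_dslope_fslope⟩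
  refine ((isBigO_refl (fun z => z - z₀) (𝓝 z₀)).mul
    hslope.differentiableAt.isBigO_sub).congr (fun z => ?_) fun z => (sq _).symm
  rw [mul_sub, dslope_same, ← smul_eq_mul, sub_smul_dslope]

theorem tendsto_ofReal_mul_nhdsGT_zero (v : ℂ) :
    Tendsto (fun s : ℝ => (s : ℂ) * v) (𝓝[>] 0) (𝓝 0) := by
  have hcont : Continuous fun s : ℝ => (s : ℂ) * v := by fun_prop
  have hlim := hcont.tendsto 0
  simp only [ofReal_zero, zero_mul] at hlim
  exact hlim.mono_left nhdsWithin_le_nhds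

theorem IsPowerNormalForm.isBigO_im_sub (h : IsPowerNormalForm Z χ m₀ E₀ κ k) (v : ℂ) :
    (fun s : ℝ => (χ (s * v)).im - v.im * s) =O[𝓝[>] 0] fun s => s ^ 2 := by
  have hray := tendsto_ofReal_mul_nhdsGT_zero v
  have hquad := (isBigO_sub_sub_deriv_mul h.analyticAt).comp_tendsto hray
  refine (IsBigO.of_bound 1 (Eventually.of_forall fun s => ?_)).trans
    (hquad.trans (IsBigO.of_bound (‖v‖ ^ 2) (Eventually.of_forall fun s => ?_)))
  · rw [one_mul, Function.comp_apply, h.hasDerivAt.deriv, h.map_zero]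
    refine le_of_eq_of_le ?_ (abs_im_le_norm _)
    simp [mul_comm]
  · simp [mul_pow, mul_comm]

theorem eventually_pos_of_isBigO_sub_mul {f : ℝ → ℝ} {a : ℝ} (ha : 0 < a)
    (h : (fun s => f s - a * s) =O[𝓝[>] 0] fun s => s ^ 2) : ∀ᶠ s in 𝓝[>] 0, 0 < f s := by
  have hlittle := h.trans_isLittleO
    ((isLittleO_pow_id one_lt_two).mono (nhdsWithin_le_nhds (s := Ioi (0 : ℝ))))
  filter_upwards [hlittle.def (half_pos ha), self_mem_nhdsWithin] with s hs hpos
  have hpos' : 0 < s := hpos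
  rw [Real.norm_eq_abs, Real.norm_of_nonneg hpos'.le] at hs
  nlinarith [(abs_le.1 hs).1]

variable {v : ℂ} {σ : ℝ}

/-- Along a ray on which `u ^ k` is real, `Z ∘ χ` is real while `χ` lies in the upper half-plane:
there the density is the imaginary part of `χ`. -/
theorem IsBoundaryInverse.eventually_pi_mul_eq_im_ray
    (hZ : IsBoundaryInverse M Z m₀ E₀) (hM : HasBoundaryDensity M ρ)
    (h : IsPowerNormalForm Z χ m₀ E₀ κ k) (hv : 0 < v.im) (hσ : v ^ k = σ) :
    ∀ᶠ s in 𝓝[>] (0 : ℝ), Real.pi * ρ (E₀ + κ * σ * s ^ k) = (χ (s * v)).im := by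
  have hray := tendsto_ofReal_mul_nhdsGT_zero v
  have hχ : Tendsto χ (𝓝 0) (𝓝 (m₀ : ℂ)) := h.map_zero ▸ h.analyticAt.continuousAt.tendsto
  filter_upwards [self_mem_nhdsWithin, eventually_pos_of_isBigO_sub_mul hv (h.isBigO_im_sub v),
    hray.eventually (eventually_eventually_nhds.2 h.eventually_eq),
    hray.eventually (hχ.eventually (hZ.eventually_pi_mul_eq_im hM)),
    hray.eventually h.analyticAt.eventually_analyticAt] with s hs him hZχ hρ hana
  have hsv : (s : ℂ) * v ≠ 0 :=
    mul_ne_zero (ofReal_ne_zero.2 (ne_of_gt hs)) fun hv₀ => hv.ne' (by rw [hv₀, zero_im])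
  have hvalue : E₀ + κ * ((s : ℂ) * v) ^ k = (E₀ + κ * σ * s ^ k : ℝ) := by
    rw [mul_pow, hσ]
    push_cast
    ring
  refine hρ _ (hZχ.self_of_nhds.trans hvalue) (hana.continuousAt.tendsto.frequently ?_)
  have hpow : HasStrictDerivAt (fun u : ℂ => E₀ + κ * u ^ k)
      (κ * (k * ((s : ℂ) * v) ^ (k - 1))) (s * v) :=
    ((hasStrictDerivAt_pow k _).const_mul _).const_add _
  have hpow' : κ * (k * ((s : ℂ) * v) ^ (k - 1)) ≠ 0 :=
    mul_ne_zero (ofReal_ne_zero.2 h.coeff_ne_zero)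
      (mul_ne_zero (Nat.cast_ne_zero.2 h.order_ne_zero) (pow_ne_zero _ hsv))
  have hχim : ∀ᶠ u in 𝓝 ((s : ℂ) * v), 0 < (χ u).im :=
    (continuous_im.continuousAt.comp hana.continuousAt).eventually (lt_mem_nhds him)
  refine ((frequently_im_pos_of_hasStrictDerivAt hpow hpow' hvalue).and_eventually
    (hχim.and hZχ)).mono fun u hu => ⟨hu.2.1, ?_⟩
  rw [hu.2.2]
  exact hu.1

theorem IsBoundaryInverse.isBigO_pi_mul_sub
    (hZ : IsBoundaryInverse M Z m₀ E₀) (hM : HasBoundaryDensity M ρ)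
    (h : IsPowerNormalForm Z χ m₀ E₀ κ k) (hv : 0 < v.im) (hσ : v ^ k = σ) :
    (fun s => Real.pi * ρ (E₀ + κ * σ * s ^ k) - v.im * s) =O[𝓝[>] 0] fun s => s ^ 2 :=
  (h.isBigO_im_sub v).congr' ((hZ.eventually_pi_mul_eq_im_ray hM h hv hσ).mono
    fun s hs => by simp only [hs]) EventuallyEq.rfl

theorem IsBoundaryInverse.eventually_density_pos
    (hZ : IsBoundaryInverse M Z m₀ E₀) (hM : HasBoundaryDensity M ρ)
    (h : IsPowerNormalForm Z χ m₀ E₀ κ k) (hv : 0 < v.im) (hσ : v ^ k = σ) :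
    ∀ᶠ s in 𝓝[>] (0 : ℝ), 0 < ρ (E₀ + κ * σ * s ^ k) :=
  (eventually_pos_of_isBigO_sub_mul hv (hZ.isBigO_pi_mul_sub hM h hv hσ)).mono
    fun _ hs => pos_of_mul_pos_right hs Real.pi_pos.le

end LocalAnalysis

section EdgeDichotomy

open Asymptotics

variable {f : ℝ → ℝ} {M Z χ : ℂ → ℂ} {ρ : ℝ → ℝ} {m₀ E₀ κ : ℝ} {k : ℕ}

/-- `f` vanishes on a left neighbourhood of `0`, including `0`, and behaves like a positive
multiple of `√ε` up to an error `O(ε)` to the right of `0`. -/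
def HasSqrtEdge (f : ℝ → ℝ) : Prop :=
  (∃ C₁ > 0, (fun ε => f ε - C₁ * √ε) =O[𝓝[>] 0] fun ε => ε) ∧ ∀ᶠ ε in 𝓝[≥] 0, f (-ε) = 0

theorem HasSqrtEdge.exists_abs_sub_le (h : HasSqrtEdge f) : ∃ C₁ > 0, ∃ K > 0, ∃ δ > 0,
    (∀ ε ∈ Ioo 0 δ, |f ε - C₁ * √ε| ≤ K * ε) ∧ ∀ ε ∈ Ico 0 δ, f (-ε) = 0 := by
  obtain ⟨⟨C₁, hC₁, hO⟩, hzero⟩ := h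
  obtain ⟨K, hK, hbound⟩ := hO.exists_pos
  obtain ⟨δ₁, hδ₁, h₁⟩ := mem_nhdsGT_iff_exists_Ioo_subset.1 hbound.bound
  obtain ⟨δ₂, hδ₂, h₂⟩ := mem_nhdsGE_iff_exists_Ico_subset.1 hzero
  refine ⟨C₁, hC₁, K, hK, min δ₁ δ₂, lt_min hδ₁ hδ₂, fun ε hε => ?_, fun ε hε => ?_⟩
  · have hle : ‖f ε - C₁ * √ε‖ ≤ K * ‖ε‖ := h₁ ⟨hε.1, hε.2.trans_le (min_le_left _ _)⟩
    rwa [Real.norm_eq_abs, Real.norm_of_nonneg hε.1.le] at hle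
  · exact h₂ ⟨hε.1, hε.2.trans_le (min_le_right _ _)⟩

theorem tendsto_sqrt_div_nhdsGT_zero {c : ℝ} (hc : 0 < c) :
    Tendsto (fun ε => √(ε / c)) (𝓝[>] 0) (𝓝[>] 0) := by
  refine tendsto_nhdsWithin_iff.2 ⟨?_, ?_⟩
  · have hcont : Continuous fun ε => √(ε / c) := by fun_prop
    simpa using (hcont.tendsto 0).mono_left nhdsWithin_le_nhds
  · filter_upwards [self_mem_nhdsWithin] with ε hε
    exact Real.sqrt_pos.2 (div_pos hε hc)

theorem tendsto_mul_pow_nhdsGT_zero {c : ℝ} (hc : 0 < c) (hk : k ≠ 0) :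
    Tendsto (fun s => c * s ^ k) (𝓝[>] 0) (𝓝[>] 0) := by
  refine tendsto_nhdsWithin_iff.2 ⟨?_, ?_⟩
  · have hcont : Continuous fun s => c * s ^ k := by fun_prop
    simpa [hk] using (hcont.tendsto 0).mono_left nhdsWithin_le_nhds
  · filter_upwards [self_mem_nhdsWithin] with s hs
    exact mul_pos hc (pow_pos hs k)

theorem hasSqrtEdge_of_isBigO {c : ℝ} (hc : 0 < c)
    (hO : (fun s => Real.pi * f (c * s ^ 2) - s) =O[𝓝[>] 0] fun s => s ^ 2) (hf₀ : f 0 = 0)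
    (hgap : ∀ᶠ ε in 𝓝[>] 0, f (-ε) = 0 ∨ f ε = 0) : HasSqrtEdge f := by
  have hsqrt := tendsto_sqrt_div_nhdsGT_zero hc
  have hsq : ∀ᶠ ε in 𝓝[>] (0 : ℝ), c * √(ε / c) ^ 2 = ε ∧ √(ε / c) ^ 2 = ε / c := by
    filter_upwards [self_mem_nhdsWithin] with ε (hε : 0 < ε)
    rw [Real.sq_sqrt (by positivity)]
    exact ⟨mul_div_cancel₀ ε hc.ne', rfl⟩
  have hpos : ∀ᶠ ε in 𝓝[>] (0 : ℝ), 0 < f ε := by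
    have hpos_s : ∀ᶠ s in 𝓝[>] (0 : ℝ), 0 < Real.pi * f (c * s ^ 2) :=
      eventually_pos_of_isBigO_sub_mul one_pos (by simpa only [one_mul] using hO)
    filter_upwards [hsqrt.eventually hpos_s, hsq] with ε hε hεsq
    rw [hεsq.1] at hε
    exact pos_of_mul_pos_right hε Real.pi_pos.le
  refine ⟨⟨(Real.pi * √c)⁻¹, by positivity, ?_⟩, ?_⟩
  · refine ((hO.comp_tendsto hsqrt).const_mul_left Real.pi⁻¹).congr' ?_ ?_ |>.trans
      (isBigO_const_mul_self c⁻¹ (fun ε => ε) _)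
    · filter_upwards [hsq] with ε hε
      rw [Function.comp_apply, hε.1, Real.sqrt_div' _ hc.le]
      have := Real.pi_ne_zero
      have := (Real.sqrt_pos.2 hc).ne'
      field
    · filter_upwards [hsq] with ε hε
      rw [Function.comp_apply, hε.2, div_eq_inv_mul]
  · refine eventually_nhdsWithin_iff.2 ?_
    filter_upwards [eventually_nhdsWithin_iff.1 (hpos.and hgap)] with ε hε hε₀
    rcases (mem_Ici.1 hε₀).eq_or_lt with rfl | hεpos
    · rwa [neg_zero]
    · exact (hε hεpos).2.resolve_right (hε hεpos).1.ne'

theorem exists_im_pos_pow_eq_neg_one_pow {n : ℕ} (hn : 0 < n) (hnk : n < k) :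
    ∃ v : ℂ, 0 < v.im ∧ v ^ k = (-1) ^ n := by
  have hk : (0 : ℝ) < k := Nat.cast_pos.2 (hn.trans hnk)
  refine ⟨exp ((n * Real.pi / k : ℝ) * I), ?_, ?_⟩
  · rw [exp_ofReal_mul_I_im]
    refine Real.sin_pos_of_pos_of_lt_pi (by positivity) ?_
    rw [div_lt_iff₀ hk, mul_comm]
    exact mul_lt_mul_of_pos_left (Nat.cast_lt.2 hnk) Real.pi_pos
  · have hk' : (k : ℂ) ≠ 0 := Nat.cast_ne_zero.2 (hn.trans hnk).ne'
    rw [← exp_nat_mul, ← exp_pi_mul_I, ← exp_nat_mul]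
    congr 1
    push_cast
    field

/-- If `k ≥ 3`, both `-1` and `1` are `k`-th powers of points of the upper half-plane, so the
density would be positive on both sides of `E₀`. -/
theorem IsBoundaryInverse.order_le_two (hZ : IsBoundaryInverse M Z m₀ E₀)
    (hM : HasBoundaryDensity M ρ) (h : IsPowerNormalForm Z χ m₀ E₀ κ k)
    (hgap : ∀ᶠ ε in 𝓝[>] 0, ρ (E₀ - ε) = 0 ∨ ρ (E₀ + ε) = 0) : k ≤ 2 := by
  by_contra! hk
  obtain ⟨v, hv, hvk⟩ := exists_im_pos_pow_eq_neg_one_pow one_pos (one_lt_two.trans hk)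
  obtain ⟨w, hw, hwk⟩ := exists_im_pos_pow_eq_neg_one_pow two_pos hk
  have hneg := hZ.eventually_density_pos hM h (σ := -1) hv (by simpa using hvk)
  have hpos := hZ.eventually_density_pos hM h (σ := 1) hw (by simpa using hwk)
  have hgap' := (tendsto_mul_pow_nhdsGT_zero (abs_pos.2 h.coeff_ne_zero)
    h.order_ne_zero).eventually hgap
  obtain ⟨s, ⟨hneg, hpos⟩, hgap⟩ := ((hneg.and hpos).and hgap').exists
  rcases abs_choice κ with hκ | hκ <;>
    simp only [hκ, mul_neg, mul_one, neg_mul, sub_neg_eq_add, ← sub_eq_add_neg] at hneg hpos hgap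
  · exact hgap.elim hneg.ne' hpos.ne'
  · exact hgap.elim hpos.ne' hneg.ne'

theorem IsBoundaryInverse.order_eq_two (hZ : IsBoundaryInverse M Z m₀ E₀)
    (hM : HasBoundaryDensity M ρ) (h : IsPowerNormalForm Z χ m₀ E₀ κ k)
    (hgap : ∀ᶠ ε in 𝓝[>] 0, ρ (E₀ - ε) = 0 ∨ ρ (E₀ + ε) = 0)
    (hρ : ¬∀ᶠ E in 𝓝 E₀, ρ E = 0) : k = 2 := by
  have hk := hZ.order_le_two hM h hgap
  have hk₀ := h.order_ne_zero
  interval_cases k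
  · exact absurd rfl hk₀
  · exact absurd (hZ.eventually_eq_zero_of_hasStrictDerivAt hM
      (h.hasStrictDerivAt hZ.analyticAt) h.coeff_ne_zero) hρ
  · rfl

theorem IsBoundaryInverse.hasSqrtEdge (hZ : IsBoundaryInverse M Z m₀ E₀)
    (hM : HasBoundaryDensity M ρ) (hρ₀ : ρ E₀ = 0) (hρ : ¬∀ᶠ E in 𝓝 E₀, ρ E = 0)
    (hgap : ∀ᶠ ε in 𝓝[>] 0, ρ (E₀ - ε) = 0 ∨ ρ (E₀ + ε) = 0) :
    HasSqrtEdge (fun ε => ρ (E₀ + ε)) ∨ HasSqrtEdge (fun ε => ρ (E₀ - ε)) := by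
  obtain ⟨χ, κ, k, h⟩ := hZ.exists_isPowerNormalForm
  obtain rfl := hZ.order_eq_two hM h hgap hρ
  have hO := hZ.isBigO_pi_mul_sub hM h (v := I) (σ := -1) (by simp) (by simp)
  simp only [I_im, one_mul] at hO
  rcases h.coeff_ne_zero.lt_or_gt with hκ | hκ
  · refine .inl (hasSqrtEdge_of_isBigO (neg_pos.2 hκ) ?_ (by simpa using hρ₀) hgap)
    simpa only [mul_neg, mul_one] using hO
  · refine .inr (hasSqrtEdge_of_isBigO hκ ?_ (by simpa using hρ₀) (hgap.mono fun ε hε => ?_))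
    · simpa only [mul_neg, mul_one, neg_mul, ← sub_eq_add_neg] using hO
    · rwa [sub_neg_eq_add, or_comm]

end EdgeDichotomy

section JacobiMass

variable {A B b r : ℝ}

theorem rpow_sub_mul_rpow_le_rpow {s γ x L : ℝ} (hx : 0 < x) (hxL : x ≤ L) (hsγ : s ≤ γ) :
    L ^ (s - γ) * x ^ γ ≤ x ^ s := by
  calc L ^ (s - γ) * x ^ γ ≤ x ^ (s - γ) * x ^ γ := by
        gcongr ?_ * _
        exact Real.rpow_le_rpow_of_nonpos hx hxL (sub_nonpos.2 hsγ)
    _ = x ^ s := by rw [← Real.rpow_add hx, sub_add_cancel]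

theorem exists_mul_rpow_le_rpow_mul_rpow {s t : ℝ} (hAB : A < B) (hs : s < 1) (ht : t < 1) :
    ∃ c > 0, ∃ γ < (1 : ℝ), ∀ m > 0, ∀ E ∈ Icc (A + m) (B - m),
      c * m ^ γ ≤ (E - A) ^ s * (B - E) ^ t := by
  set γ := max (max s t) 0
  set L := B - A with hL
  have : 0 < L := sub_pos.2 hAB
  refine ⟨L ^ (s - γ) * L ^ (t - γ) * (L / 2) ^ γ, by positivity, γ,
    max_lt (max_lt hs ht) one_pos, fun m hm E hE => ?_⟩
  have hA : m ≤ E - A := by linarith [hE.1]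
  have hB : m ≤ B - E := by linarith [hE.2]
  have : 0 ≤ γ := le_max_right _ _
  have hprod : L / 2 * m ≤ (E - A) * (B - E) := by
    nlinarith [mul_nonneg (sub_nonneg.2 hA) (sub_nonneg.2 hB), hL]
  calc L ^ (s - γ) * L ^ (t - γ) * (L / 2) ^ γ * m ^ γ
      = L ^ (s - γ) * L ^ (t - γ) * (L / 2 * m) ^ γ := by
        rw [Real.mul_rpow (by positivity) hm.le, mul_assoc]
    _ ≤ L ^ (s - γ) * L ^ (t - γ) * ((E - A) * (B - E)) ^ γ := by gcongr
    _ = L ^ (s - γ) * (E - A) ^ γ * (L ^ (t - γ) * (B - E) ^ γ) := by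
        rw [Real.mul_rpow (hm.le.trans hA) (hm.le.trans hB)]
        ring
    _ ≤ (E - A) ^ s * (B - E) ^ t := by
        refine mul_le_mul ?_ ?_ (by have := hm.le.trans hB; positivity)
          (Real.rpow_nonneg (hm.le.trans hA) s)
        · exact rpow_sub_mul_rpow_le_rpow (hm.trans_le hA) (by linarith [hL])
            ((le_max_left s t).trans (le_max_left _ _))
        · exact rpow_sub_mul_rpow_le_rpow (hm.trans_le hB) (by linarith [hL])
            ((le_max_right s t).trans (le_max_left _ _))

theorem exists_Icc_subset_ball (hb : b ∈ Icc A B) (hr : 0 < r) (hrAB : r ≤ (B - A) / 2) :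
    ∃ u, Icc u (u + r / 2) ⊆ Icc (A + r / 4) (B - r / 4) ∩ Metric.ball b r := by
  rcases le_total b ((A + B) / 2) with hmid | hmid
  · refine ⟨b + r / 4, fun x hx => ⟨⟨?_, ?_⟩, ?_⟩⟩
    · linarith [hx.1, hb.1]
    · linarith [hx.2]
    · rw [Metric.mem_ball, Real.dist_eq, abs_lt]
      constructor <;> linarith [hx.1, hx.2]
  · refine ⟨b - 3 * r / 4, fun x hx => ⟨⟨?_, ?_⟩, ?_⟩⟩
    · linarith [hx.1]
    · linarith [hx.2, hb.2]
    · rw [Metric.mem_ball, Real.dist_eq, abs_lt]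
      constructor <;> linarith [hx.1, hx.2]

theorem const_mul_le_withDensity {α : Type*} [MeasurableSpace α] {μ : Measure α} {S : Set α}
    {f : α → ENNReal} {c : ENNReal} (h : ∀ᵐ x ∂μ.restrict S, c ≤ f x) :
    c * μ S ≤ μ.withDensity f S :=
  calc c * μ S = ∫⁻ _ in S, c ∂μ := (setLIntegral_const S c).symm
    _ ≤ ∫⁻ x in S, f x ∂μ := lintegral_mono_ae h
    _ ≤ μ.withDensity f S := withDensity_apply_le f S

theorem const_mul_le_measureReal_ball {ρ : ℝ → ℝ} {c : ℝ}
    [IsFiniteMeasure (volume.withDensity fun x => ENNReal.ofReal (ρ x))] (hc : 0 ≤ c)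
    (hρ : ∀ᵐ E ∂volume.restrict (Icc (A + r / 4) (B - r / 4)), c ≤ ρ E)
    (hb : b ∈ Icc A B) (hr : 0 < r) (hrAB : r ≤ (B - A) / 2) :
    c * (r / 2) ≤
      (volume.withDensity fun x => ENNReal.ofReal (ρ x)).real (Metric.ball b r) := by
  obtain ⟨u, hu⟩ := exists_Icc_subset_ball hb hr hrAB
  have hρu : ∀ᵐ E ∂volume.restrict (Icc u (u + r / 2)), ENNReal.ofReal c ≤ ENNReal.ofReal (ρ E) :=
    (ae_restrict_of_ae_restrict_of_subset (hu.trans inter_subset_left) hρ).mono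
      fun _ => ENNReal.ofReal_le_ofReal
  refine (ENNReal.ofReal_le_iff_le_toReal (measure_ne_top _ _)).1 ?_
  calc ENNReal.ofReal (c * (r / 2)) = ENNReal.ofReal c * volume (Icc u (u + r / 2)) := by
        rw [Real.volume_Icc, add_sub_cancel_left, ENNReal.ofReal_mul hc]
    _ ≤ _ := const_mul_le_withDensity hρu
    _ ≤ _ := measure_mono (hu.trans inter_subset_right)

theorem tendsto_measureReal_ball_div_sq_atTop {ρ : ℝ → ℝ} {c γ : ℝ}
    [IsFiniteMeasure (volume.withDensity fun x => ENNReal.ofReal (ρ x))]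
    (hc : 0 < c) (hγ : γ < 1)
    (hρ : ∀ m > 0, ∀ᵐ E ∂volume.restrict (Icc (A + m) (B - m)), c * m ^ γ ≤ ρ E)
    (hAB : A < B) (hb : b ∈ Icc A B) :
    Tendsto (fun r => (volume.withDensity fun x => ENNReal.ofReal (ρ x)).real (Metric.ball b r)
      / r ^ 2) (𝓝[>] 0) atTop := by
  have hquarter : Tendsto (fun r : ℝ => 1 / 4 * r ^ 1) (𝓝[>] 0) (𝓝[>] 0) :=
    tendsto_mul_pow_nhdsGT_zero (by norm_num) one_ne_zero
  refine tendsto_atTop_mono' _ ?_ (((tendsto_rpow_neg_nhdsGT_zero (sub_neg.2 hγ)).comp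
    hquarter).const_mul_atTop (div_pos hc (by norm_num : (0 : ℝ) < 8)))
  filter_upwards [self_mem_nhdsWithin, Ioc_mem_nhdsGT (half_pos (sub_pos.2 hAB))]
    with r (hr : 0 < r) hrAB
  have hmass := const_mul_le_measureReal_ball (by positivity) (hρ (r / 4) (by positivity)) hb hr
    hrAB.2
  rw [le_div_iff₀ (by positivity)]
  refine le_of_eq_of_le ?_ hmass
  rw [Function.comp_apply, pow_one, one_div_mul_eq_div, Real.rpow_sub_one (by positivity)]
  field

end JacobiMass

namespace AbsJacobiData

variable {μ : Measure ℝ}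

theorem exists_mul_rpow_le_density (d : AbsJacobiData μ) (j : Fin d.n) :
    ∃ c > 0, ∃ γ < (1 : ℝ), ∀ m > 0,
      ∀ᵐ E ∂volume.restrict (Icc (d.Am j + m) (d.Ap j - m)), c * m ^ γ ≤ d.ρ E := by
  obtain ⟨c, hc, γ, hγ, hweight⟩ :=
    exists_mul_rpow_le_rpow_mul_rpow (d.lt j) (d.sm_mem j).2 (d.sp_mem j).2
  have hC : 0 < d.Cj j := one_pos.trans_le (d.Cj_ge j)
  refine ⟨(d.Cj j)⁻¹ * c, by positivity, γ, hγ, fun m hm => ?_⟩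
  have hsubset : Icc (d.Am j + m) (d.Ap j - m) ⊆ Icc (d.Am j) (d.Ap j) :=
    Icc_subset_Icc (by linarith) (by linarith)
  filter_upwards [ae_restrict_of_ae_restrict_of_subset hsubset (d.powerLaw j),
    ae_restrict_mem measurableSet_Icc] with E hpower hE
  refine le_trans ?_ hpower.1
  rw [mul_assoc]
  exact mul_le_mul_of_nonneg_left (hweight m hm E hE) (inv_nonneg.2 hC.le)

theorem support_subset (d : AbsJacobiData μ) : μ.support ⊆ ⋃ j, Icc (d.Am j) (d.Ap j) := by
  have hclosed : IsClosed (⋃ j, Icc (d.Am j) (d.Ap j)) :=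
    isClosed_iUnion_of_finite fun _ => isClosed_Icc
  refine Measure.support_subset_of_isClosed hclosed (mem_ae_iff.2 ?_)
  calc μ (⋃ j, Icc (d.Am j) (d.Ap j))ᶜ
      = ∫⁻ x in (⋃ j, Icc (d.Am j) (d.Ap j))ᶜ, ENNReal.ofReal (d.ρ x) :=
        (DFunLike.congr_fun d.decomp _).trans (withDensity_apply _ hclosed.measurableSet.compl)
    _ = 0 := setLIntegral_eq_zero hclosed.measurableSet.compl fun x hx => by simp [d.ρ_supp x hx]

theorem hasSuperquadraticMass (d : AbsJacobiData μ) : HasSuperquadraticMass μ where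
  toIsProbabilityMeasure := d.prob
  measure_singleton x := by
    have hac := withDensity_absolutelyContinuous volume fun x => ENNReal.ofReal (d.ρ x)
    rw [← d.decomp] at hac
    exact hac (measure_singleton x)
  isCompact_support := (isCompact_iUnion fun _ => isCompact_Icc).of_isClosed_subset
    Measure.isClosed_support d.support_subset
  tendsto_mass b hb := by
    obtain ⟨j, hj⟩ := mem_iUnion.1 (d.support_subset hb)
    obtain ⟨c, hc, γ, hγ, hρ⟩ := d.exists_mul_rpow_le_density j
    have := d.prob
    rw [d.decomp] at this ⊢
    exact tendsto_measureReal_ball_div_sq_atTop hc hγ hρ (d.lt j) hj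

end AbsJacobiData

section ExteriorPoints

variable {ρ : ℝ → ℝ} {E₀ : ℝ}

theorem HasSqrtEdge.exists_abs_sub_le_right (h : HasSqrtEdge fun ε => ρ (E₀ + ε)) :
    ∃ C₁ > 0, ∃ K > 0, ∃ δ > 0,
      (∀ E ∈ Ioo E₀ (E₀ + δ), |ρ E - C₁ * √(E - E₀)| ≤ K * (E - E₀)) ∧
        ∀ E ∈ Ioc (E₀ - δ) E₀, ρ E = 0 := by
  obtain ⟨C₁, hC₁, K, hK, δ, hδ, hsqrt, hzero⟩ := h.exists_abs_sub_le
  refine ⟨C₁, hC₁, K, hK, δ, hδ, fun E hE => ?_, fun E hE => ?_⟩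
  · simpa using hsqrt (E - E₀) ⟨by linarith [hE.1], by linarith [hE.2]⟩
  · simpa using hzero (E₀ - E) ⟨by linarith [hE.2], by linarith [hE.1]⟩

theorem HasSqrtEdge.exists_abs_sub_le_left (h : HasSqrtEdge fun ε => ρ (E₀ - ε)) :
    ∃ C₁ > 0, ∃ K > 0, ∃ δ > 0,
      (∀ E ∈ Ioo (E₀ - δ) E₀, |ρ E - C₁ * √(E₀ - E)| ≤ K * (E₀ - E)) ∧
        ∀ E ∈ Ico E₀ (E₀ + δ), ρ E = 0 := by
  obtain ⟨C₁, hC₁, K, hK, δ, hδ, hsqrt, hzero⟩ := h.exists_abs_sub_le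
  refine ⟨C₁, hC₁, K, hK, δ, hδ, fun E hE => ?_, fun E hE => ?_⟩
  · simpa using hsqrt (E₀ - E) ⟨by linarith [hE.2], by linarith [hE.1]⟩
  · simpa using hzero (E - E₀) ⟨by linarith [hE.1], by linarith [hE.2]⟩

theorem eq_zero_of_mem_frontier_setOf_pos (hcont : Continuous ρ) (hnn : ∀ x, 0 ≤ ρ x)
    (hE₀ : E₀ ∈ frontier {E | 0 < ρ E}) : ρ E₀ = 0 := by
  rw [(isOpen_lt continuous_const hcont).frontier_eq] at hE₀
  exact (hnn E₀).eq_of_not_lt' hE₀.2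

theorem not_eventually_eq_zero_of_mem_frontier_setOf_pos (hE₀ : E₀ ∈ frontier {E | 0 < ρ E}) :
    ¬∀ᶠ E in 𝓝 E₀, ρ E = 0 := fun h =>
  have ⟨_, hpos, hzero⟩ := ((mem_closure_iff_frequently.1 hE₀.1).and_eventually h).exists
  hpos.ne' hzero

end ExteriorPoints

theorem statement18_general {μa μb ν : Measure ℝ} (ha : HasSuperquadraticMass μa)
    (hb : HasSuperquadraticMass μb) {ωa ωb : ℂ → ℂ} (hsub : IsPairSubordination μa μb ωa ωb)
    (hν : IsFreeConv μa μb ωb ν) {ρab : ℝ → ℝ} (hcont : Continuous ρab) (hnn : ∀ x, 0 ≤ ρab x)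
    (hdens : ν = volume.withDensity (fun x => ENNReal.ofReal (ρab x)))
    {E0 : ℝ} (hE0 : E0 ∈ frontier {E : ℝ | 0 < ρab E})
    (hext : ∃ ε₀ > (0 : ℝ), ∀ ε : ℝ, 0 < ε → ε < ε₀ →
      E0 - ε ∉ msupport ν ∨ E0 + ε ∉ msupport ν) :
    ∃ C1 > (0 : ℝ), ∃ K > (0 : ℝ), ∃ δ > (0 : ℝ),
      ((∀ E ∈ Set.Ioo E0 (E0 + δ),
          |ρab E - C1 * Real.sqrt (E - E0)| ≤ K * (E - E0)) ∧
        ∀ E ∈ Set.Ioc (E0 - δ) E0, ρab E = 0) ∨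
      ((∀ E ∈ Set.Ioo (E0 - δ) E0,
          |ρab E - C1 * Real.sqrt (E0 - E)| ≤ K * (E0 - E)) ∧
        ∀ E ∈ Set.Ico E0 (E0 + δ), ρab E = 0) := by
  subst hdens
  have := hν.1
  have hM := hasBoundaryDensity_mTr_withDensity hcont hnn
  have hzero := eq_zero_of_mem_frontier_setOf_pos hcont hnn hE0
  have hgap : ∀ᶠ ε in 𝓝[>] 0, ρab (E0 - ε) = 0 ∨ ρab (E0 + ε) = 0 := by
    obtain ⟨ε₀, hε₀, hout⟩ := hext
    filter_upwards [Ioo_mem_nhdsGT hε₀] with ε hε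
    exact (hout ε hε.1 hε.2).imp (eq_zero_of_notMem_msupport_withDensity hcont hnn)
      (eq_zero_of_notMem_msupport_withDensity hcont hnn)
  obtain ⟨Z, m₀, hZ⟩ := exists_isBoundaryInverse ha hb hsub hν (by simpa [hzero] using hM E0)
  rcases hZ.hasSqrtEdge hM hzero (not_eventually_eq_zero_of_mem_frontier_setOf_pos hE0) hgap
    with hedge | hedge
  · obtain ⟨C₁, hC₁, K, hK, δ, hδ, h⟩ := hedge.exists_abs_sub_le_right
    exact ⟨C₁, hC₁, K, hK, δ, hδ, .inl h⟩
  · obtain ⟨C₁, hC₁, K, hK, δ, hδ, h⟩ := hedge.exists_abs_sub_le_left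
    exact ⟨C₁, hC₁, K, hK, δ, hδ, .inr h⟩

/-- Theorem 2.6, exterior points: square-root decay of the density of
`μ_α ⊞ μ_β` at any exterior point `E₀` of `𝒱_{α⊞β}`. -/
theorem statement18 (μa μb : Measure ℝ)
    (da : AbsJacobiData μa) (db : AbsJacobiData μb)
    (ωa ωb : ℂ → ℂ) (hsub : IsPairSubordination μa μb ωa ωb)
    (ν : Measure ℝ) (hν : IsFreeConv μa μb ωb ν)
    (ρab : ℝ → ℝ) (hcont : Continuous ρab) (hnn : ∀ x, 0 ≤ ρab x)
    (hdens : ν = volume.withDensity (fun x => ENNReal.ofReal (ρab x)))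
    (E0 : ℝ) (hE0 : E0 ∈ frontier {E : ℝ | 0 < ρab E})
    (hext : ∃ ε₀ > (0 : ℝ), ∀ ε : ℝ, 0 < ε → ε < ε₀ →
      E0 - ε ∉ msupport ν ∨ E0 + ε ∉ msupport ν) :
    ∃ C1 > (0 : ℝ), ∃ K > (0 : ℝ), ∃ δ > (0 : ℝ),
      ((∀ E ∈ Set.Ioo E0 (E0 + δ),
          |ρab E - C1 * Real.sqrt (E - E0)| ≤ K * (E - E0)) ∧
        ∀ E ∈ Set.Ioc (E0 - δ) E0, ρab E = 0) ∨
      ((∀ E ∈ Set.Ioo (E0 - δ) E0,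
          |ρab E - C1 * Real.sqrt (E0 - E)| ≤ K * (E0 - E)) ∧
        ∀ E ∈ Set.Ico E0 (E0 + δ), ρab E = 0) :=
  statement18_general da.hasSuperquadraticMass db.hasSuperquadraticMass hsub hν hcont hnn hdens hE0
    hext

end
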